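/- arXiv:1003.6121 — 3 statements merged into one kernel-verified Lean document; each statement's English description precedes it below -/
import Mathlib

section
/- (Johansson-type variance lemma) Let β>0, let V satisfy conditions C1–C3 with equilibrium density ρ, fix ε>0 small and d>0 with {z : dist(z,[−2,2]) ≤ 2d} ⊂ D, and let I = [−2−ε, 2+ε]. Let φ be analytic on D and real-valued on ℝ, and let w_n ≥ 1. Suppose that for every function h analytic on D and real-valued on ℝ one has n·| ∫_I φ(λ) (p_{1,β,h}^{(n)}(λ) − ρ(λ)) dλ | ≤ w_n · ( sup_{dist(z,[−2,2])=2d} |φ(z)| + sup_{λ∈I} |h'(λ)| ). Then there exists a constant C* independent of n such that for every such h the variance of Σ_{i=1}^n φ(λ_i) under p_{n,β,h} is at most C* · w_n² · sup_{dist(z,[−2,2])≤2d} |φ(z)|². -/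
/-!
For every `β > 0` the variance of `∑ φ (λ_i)` is bounded by a constant depending only on `β`, on the
Lipschitz constant `K` of `φ` on `I` and on the length `L` of `I`, uniformly in `n` and `h`; as
`w ≥ 1`, this gives the claim after dividing by `sup |φ|²` (if that supremum is `0`, then `φ = 0` on
`I` and the variance is `0`).

To bound the variance, take two independent replicas and merge their `2n` points into one
configuration `z`. Conditionally on `z`, the assignment of points to replicas is a neutral `±1`
colouring `c` with law proportional to `exp ((κ/2) ∑_{i,j} c_i c_j log |z_i - z_j|)`, `κ = β/2`; the
potential cancels. The difference of the two linear statistics is `X = ∑ c_i φ(z_i)`, and twice the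
variance is its second moment (`replica_bound`, `variance_le`).

For fixed sorted `z`, encode `c` by its partial sums `U` (`hgt`), a lattice excursion. Summation by
parts turns the energy into `½ ∑ M_{gh} U_g U_h` (`pairEnergy_eq`), where `M` is nonnegative off the
diagonal, being a logarithm of cross ratios, and has row sums at most `-κ δ_g / L` with `δ_g` the gap
lengths (`heightMat_nonneg`, `heightMat_row_le`). In the variables `t = sign (1 - U)` this is a
ferromagnet in a nonnegative field, so the first Griffiths inequality shows that the mean of `U_g` is
at most `1` (`sum_box_nonpos`). The field survives a tilt by `exp (θ X)` with `|θ| ≤ κ / (K L)`, so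
by symmetry the tilted means satisfy `|⟨U_g⟩| ≤ 1` and `⟨X⟩ ≤ K L` (`mean_linStat_le`). Integrating
in `θ` bounds an exponential moment of `X`, hence `⟨X²⟩` (`sum_sq_le_of_strictMono`).
-/

open MeasureTheory Metric

/-- Unnormalized joint eigenvalue density of the β-ensemble with potential `V`. -/
noncomputable def betaWeight (β : ℝ) (V : ℝ → ℝ) (n : ℕ) (Λ : Fin n → ℝ) : ℝ :=
  (∏ i, Real.exp (-((n : ℝ) * β * V (Λ i)) / 2)) *
    ∏ i, ∏ j ∈ Finset.Ioi i, |Λ i - Λ j| ^ β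

/-- The segment `[-2,2]` as a subset of `ℂ`. -/
noncomputable def seg : Set ℂ := Complex.ofReal '' Set.Icc (-2 : ℝ) 2

/-- Conditions C1–C3. -/
structure EquilC13 (V : ℝ → ℝ) (D : Set ℂ) (ρ : ℝ → ℝ) (P : ℂ → ℂ) : Prop where
  D_open : IsOpen D
  D_supset : ∀ x : ℝ, x ∈ Set.Icc (-2:ℝ) 2 → (x : ℂ) ∈ D
  ρ_nonneg : ∀ x, 0 ≤ ρ x
  ρ_int : ∫ x, ρ x = 1
  ρ_supp : ∀ x, x ∉ Set.Icc (-2:ℝ) 2 → ρ x = 0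
  P_anal : DifferentiableOn ℂ P D
  P_pos : ∃ c > 0, ∀ x : ℝ, x ∈ Set.Icc (-2:ℝ) 2 → (P x).im = 0 ∧ c ≤ (P x).re
  ρ_eq : ∀ x ∈ Set.Icc (-2:ℝ) 2,
    ρ x = (1 / (2 * Real.pi)) * (P x).re * Real.sqrt (4 - x ^ 2)
  V_anal : ∃ Vc : ℂ → ℂ, DifferentiableOn ℂ Vc D ∧ ∀ x : ℝ, (x : ℂ) ∈ D → Vc x = V x
  equil : ∃ c : ℝ, (∀ x ∈ Set.Icc (-2:ℝ) 2,
      2 * (∫ μ, Real.log |x - μ| * ρ μ) - V x = c) ∧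
    ∀ x, x ∉ Set.Icc (-2:ℝ) 2 → 2 * (∫ μ, Real.log |x - μ| * ρ μ) - V x < c

/-- Weight of the `h`-modified ensemble (potential `V + h/n`, `h` given by the real part of
an analytic function on the reals). -/
noncomputable def modWeight (β : ℝ) (V : ℝ → ℝ) (h : ℂ → ℂ) (n : ℕ) (Λ : Fin n → ℝ) : ℝ :=
  betaWeight β (fun x => V x + (h x).re / n) n Λ

/-- Partition function of the `h`-modified ensemble restricted to `I = [-2-ε, 2+ε]`. -/
noncomputable def modZ (β : ℝ) (V : ℝ → ℝ) (h : ℂ → ℂ) (ε : ℝ) (n : ℕ) : ℝ :=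
  ∫ Λ in Set.univ.pi (fun _ : Fin n => Set.Icc (-2 - ε) (2 + ε)), modWeight β V h n Λ

/-- First marginal density `p_{1,β,h}^{(n)}` (with `n = k+2`) of the `h`-modified
ensemble restricted to `I = [-2-ε, 2+ε]`. -/
noncomputable def modP1 (β : ℝ) (V : ℝ → ℝ) (h : ℂ → ℂ) (ε : ℝ) (k : ℕ) (l : ℝ) : ℝ :=
  (modZ β V h ε (k + 2))⁻¹ *
    ∫ y in Set.univ.pi (fun _ : Fin (k + 1) => Set.Icc (-2 - ε) (2 + ε)),
      modWeight β V h (k + 2) (Fin.cons l y)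

/-- Mean of `Σ φ(λ_i)` under the `h`-modified ensemble restricted to `I`. -/
noncomputable def modMean (β : ℝ) (V : ℝ → ℝ) (h : ℂ → ℂ) (ε : ℝ) (n : ℕ) (φR : ℝ → ℝ) : ℝ :=
  (modZ β V h ε n)⁻¹ *
    ∫ Λ in Set.univ.pi (fun _ : Fin n => Set.Icc (-2 - ε) (2 + ε)),
      modWeight β V h n Λ * ∑ i, φR (Λ i)

/-- Variance of `Σ φ(λ_i)` under the `h`-modified ensemble restricted to `I`. -/
noncomputable def modVar (β : ℝ) (V : ℝ → ℝ) (h : ℂ → ℂ) (ε : ℝ) (n : ℕ) (φR : ℝ → ℝ) : ℝ :=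
  (modZ β V h ε n)⁻¹ *
    ∫ Λ in Set.univ.pi (fun _ : Fin n => Set.Icc (-2 - ε) (2 + ε)),
      modWeight β V h n Λ * ((∑ i, φR (Λ i)) - modMean β V h ε n φR) ^ 2

namespace BG

/-! ### Functions of signs with nonnegative character coefficients -/

/-- A real function on the group `{±1}^ι` all of whose Fourier coefficients, against the characters
`t ↦ ∏_{i ∈ A} t i`, are nonnegative. This is the class in which the first Griffiths inequality
lives. -/
def CharPos {ι : Type*} [Fintype ι] [DecidableEq ι] (g : (ι → ℤˣ) → ℝ) : Prop :=
  ∀ A : Finset ι, 0 ≤ ∑ t : ι → ℤˣ, g t * ∏ i ∈ A, ((t i : ℤ) : ℝ)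

variable {ι : Type*} [Fintype ι] [DecidableEq ι]

lemma unit_sq (u : ℤˣ) : ((u : ℤ) : ℝ) * ((u : ℤ) : ℝ) = 1 := by
  rcases Int.units_eq_one_or u with h | h <;> simp [h]

lemma charPos_const {a : ℝ} (ha : 0 ≤ a) : CharPos (fun _ : ι → ℤˣ => a) := by
  intro A
  rw [← Finset.mul_sum]
  refine mul_nonneg ha ?_
  have h : ∀ t : ι → ℤˣ, ∏ i ∈ A, ((t i : ℤ) : ℝ)
      = ∏ i, (if i ∈ A then ((t i : ℤ) : ℝ) else 1) := by
    intro t; rw [Finset.prod_ite_mem]; simp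
  simp_rw [h]
  have := (Finset.prod_univ_sum (fun _ : ι => (Finset.univ : Finset ℤˣ))
    (fun i (u : ℤˣ) => if i ∈ A then ((u : ℤ) : ℝ) else 1))
  rw [Fintype.piFinset_univ] at this
  rw [← this]
  refine Finset.prod_nonneg fun i _ => ?_
  have hu : (Finset.univ : Finset ℤˣ) = {1, -1} := by decide
  rw [hu]
  by_cases hi : i ∈ A <;> simp [hi]

/-- Products of characters are characters (of the symmetric difference), so multiplying by a
nonnegative combination of `1` and a character preserves nonnegativity of the coefficients. -/
lemma CharPos.mul {g : (ι → ℤˣ) → ℝ} (hg : CharPos g) {a b : ℝ} (ha : 0 ≤ a) (hb : 0 ≤ b)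
    (B : Finset ι) : CharPos (fun t => g t * (a + b * ∏ i ∈ B, ((t i : ℤ) : ℝ))) := by
  intro A
  have key : ∀ t : ι → ℤˣ, (∏ i ∈ B, ((t i : ℤ) : ℝ)) * (∏ i ∈ A, ((t i : ℤ) : ℝ))
      = ∏ i ∈ symmDiff B A, ((t i : ℤ) : ℝ) := by
    intro t
    have e : ∀ C : Finset ι, ∏ i ∈ C, ((t i : ℤ) : ℝ)
      = ∏ i, (if i ∈ C then ((t i : ℤ) : ℝ) else 1) := by
      intro C; rw [Finset.prod_ite_mem]; simp
    rw [e, e, e, ← Finset.prod_mul_distrib]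
    refine Finset.prod_congr rfl fun i _ => ?_
    by_cases h1 : i ∈ B <;> by_cases h2 : i ∈ A <;>
      simp [h1, h2, Finset.mem_symmDiff, unit_sq]
  have : ∀ t : ι → ℤˣ, g t * (a + b * ∏ i ∈ B, ((t i : ℤ) : ℝ)) * ∏ i ∈ A, ((t i : ℤ) : ℝ)
      = a * (g t * ∏ i ∈ A, ((t i : ℤ) : ℝ))
        + b * (g t * ∏ i ∈ symmDiff B A, ((t i : ℤ) : ℝ)) := by
    intro t; rw [← key]; ring
  simp_rw [this, Finset.sum_add_distrib, ← Finset.mul_sum]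
  exact add_nonneg (mul_nonneg ha (hg A)) (mul_nonneg hb (hg _))

/-- The form of `CharPos.mul` used below: the factor `q` depends on `t` only through one character,
and is at least as large where that character is `1` as where it is `-1`. -/
lemma CharPos.mul_fun {g : (ι → ℤˣ) → ℝ} (hg : CharPos g) (B : Finset ι) {q : (ι → ℤˣ) → ℝ}
    {u v : ℝ} (hv : 0 ≤ v) (huv : v ≤ u)
    (h1 : ∀ t, ∏ i ∈ B, t i = 1 → q t = u) (h2 : ∀ t, ∏ i ∈ B, t i = -1 → q t = v) :
    CharPos (fun t => g t * q t) := by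
  have : (fun t => g t * q t)
      = fun t => g t * ((u + v) / 2 + (u - v) / 2 * ∏ i ∈ B, ((t i : ℤ) : ℝ)) := by
    funext t
    have e : ∏ i ∈ B, ((t i : ℤ) : ℝ) = (((∏ i ∈ B, t i : ℤˣ) : ℤ) : ℝ) := by
      push_cast; rfl
    rw [e]
    rcases Int.units_eq_one_or (∏ i ∈ B, t i) with h | h
    · rw [h1 t h, h]; push_cast; ring
    · rw [h2 t h, h]; push_cast; ring
  rw [this]
  exact hg.mul (by linarith) (by linarith) B

lemma CharPos.mul_prod {α : Type*} {g : (ι → ℤˣ) → ℝ} (hg : CharPos g) (s : Finset α)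
    (q : α → (ι → ℤˣ) → ℝ)
    (hq : ∀ a ∈ s, ∀ g : (ι → ℤˣ) → ℝ, CharPos g → CharPos (fun t => g t * q a t)) :
    CharPos (fun t => g t * ∏ a ∈ s, q a t) := by
  classical
  induction s using Finset.induction_on with
  | empty => simpa using hg
  | insert a s ha ih =>
    have h := hq a (Finset.mem_insert_self _ _) _
      (ih fun b hb => hq b (Finset.mem_insert_of_mem hb))
    have e : (fun t => g t * ∏ a ∈ insert a s, q a t)
        = fun t => (g t * ∏ a ∈ s, q a t) * q a t := by
      funext t; rw [Finset.prod_insert ha]; ring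
    rw [e]; exact h

/-! ### Reflection of lattice heights at level one -/

/-- Lattice excursions: the interior heights `U 0, …, U m` of a `±1` walk of `m + 2` steps from `0`
to `0`. The two endpoints, both at height `0`, are not recorded. -/
def IsHeight {m : ℕ} (U : Fin (m + 1) → ℤ) : Prop :=
  |U 0| = 1 ∧ |U (Fin.last m)| = 1 ∧ ∀ j : Fin m, |U j.succ - U j.castSucc| = 1

instance instDecidableIsHeight {m : ℕ} (U : Fin (m + 1) → ℤ) : Decidable (IsHeight U) := by
  unfold IsHeight; infer_instance

/-- The exponent `½ ⟨U, M U⟩ + ⟨f, U⟩` of a Gibbs weight on heights. -/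
noncomputable def heightExp {m : ℕ} (M : Fin (m + 1) → Fin (m + 1) → ℝ) (f : Fin (m + 1) → ℝ)
    (U : Fin (m + 1) → ℤ) : ℝ :=
  1 / 2 * (∑ k, ∑ l, M k l * ((U k : ℝ) * (U l : ℝ))) + ∑ k, f k * (U k : ℝ)

/-- The Gibbs weight `exp (½ ⟨U, M U⟩ + ⟨f, U⟩)`, set to zero off the lattice excursions. -/
noncomputable def heightWeight {m : ℕ} (M : Fin (m + 1) → Fin (m + 1) → ℝ)
    (f : Fin (m + 1) → ℝ) (U : Fin (m + 1) → ℤ) : ℝ :=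
  if IsHeight U then Real.exp (heightExp M f U) else 0

/-- The endpoint constraint favours the sign `t k = 1`: with `T k ≥ 0`, the condition
`|1 + T k| = 1` implies `|1 - T k| = 1`. -/
lemma charPos_boundary {m : ℕ} (T : Fin (m + 1) → ℕ) (k : Fin (m + 1))
    (g : (Fin (m + 1) → ℤˣ) → ℝ) (hg : CharPos g) :
    CharPos (fun t => g t * if |1 - (t k : ℤ) * (T k : ℤ)| = 1 then (1 : ℝ) else 0) := by
  refine hg.mul_fun {k} (u := if |1 - (T k : ℤ)| = 1 then (1 : ℝ) else 0)
    (v := if |1 + (T k : ℤ)| = 1 then (1 : ℝ) else 0) (by split_ifs <;> simp) ?_ ?_ ?_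
  · by_cases h : |1 + (T k : ℤ)| = 1
    · have h' : |1 - (T k : ℤ)| = 1 := by
        have h0 : (T k : ℤ) = 0 := by
          rw [abs_of_nonneg (by positivity)] at h; linarith
        simp [h0]
      rw [if_pos h, if_pos h']
    · rw [if_neg h]; split_ifs <;> simp
  · intro t ht; simp only [Finset.prod_singleton] at ht; simp [ht]
  · intro t ht; simp only [Finset.prod_singleton] at ht; simp [ht]

/-- The unit-step constraint favours equal signs: with `T k, T l ≥ 0`, the condition
`|T k + T l| = 1` implies `|T k - T l| = 1`. -/
lemma charPos_step {m : ℕ} (T : Fin (m + 1) → ℕ) (k l : Fin (m + 1)) (hkl : k ≠ l)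
    (g : (Fin (m + 1) → ℤˣ) → ℝ) (hg : CharPos g) :
    CharPos (fun t => g t * if |(1 - (t k : ℤ) * (T k : ℤ)) - (1 - (t l : ℤ) * (T l : ℤ))| = 1
      then (1 : ℝ) else 0) := by
  refine hg.mul_fun {k, l} (u := if |(T k : ℤ) - (T l : ℤ)| = 1 then (1 : ℝ) else 0)
    (v := if |(T k : ℤ) + (T l : ℤ)| = 1 then (1 : ℝ) else 0) (by split_ifs <;> simp) ?_ ?_ ?_
  · by_cases h : |(T k : ℤ) + (T l : ℤ)| = 1
    · have h' : |(T k : ℤ) - (T l : ℤ)| = 1 := by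
        rw [abs_of_nonneg (by positivity)] at h
        have h0 : (T k = 0 ∧ T l = 1) ∨ (T k = 1 ∧ T l = 0) := by omega
        rcases h0 with ⟨a, b⟩ | ⟨a, b⟩ <;> simp [a, b]
      rw [if_pos h, if_pos h']
    · rw [if_neg h]; split_ifs <;> simp
  · intro t ht
    rw [Finset.prod_pair hkl] at ht
    congr 2
    rcases Int.units_eq_one_or (t k) with h | h <;> rcases Int.units_eq_one_or (t l) with h' | h' <;>
      simp [h, h'] at ht ⊢
    · rw [← abs_neg]; congr 1; ring
  · intro t ht
    rw [Finset.prod_pair hkl] at ht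
    congr 2
    rcases Int.units_eq_one_or (t k) with h | h <;> rcases Int.units_eq_one_or (t l) with h' | h' <;>
      simp [h, h'] at ht ⊢
    · rw [← abs_neg]; congr 1; ring

lemma charPos_exp_one {p : ι → ℝ} (hp : ∀ k, 0 ≤ p k) (k : ι) (g : (ι → ℤˣ) → ℝ)
    (hg : CharPos g) : CharPos (fun t => g t * Real.exp (p k * ((t k : ℤ) : ℝ))) := by
  refine hg.mul_fun {k} (u := Real.exp (p k)) (v := Real.exp (-p k)) (Real.exp_nonneg _)
    (Real.exp_le_exp.2 (by linarith [hp k])) ?_ ?_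
  · intro t ht; simp only [Finset.prod_singleton] at ht; simp [ht]
  · intro t ht; simp only [Finset.prod_singleton] at ht; simp [ht]

lemma charPos_exp_two {q : ι → ι → ℝ} (hq : ∀ k l, k ≠ l → 0 ≤ q k l) (k l : ι)
    (g : (ι → ℤˣ) → ℝ) (hg : CharPos g) :
    CharPos (fun t => g t * Real.exp (q k l * (((t k : ℤ) : ℝ) * ((t l : ℤ) : ℝ)))) := by
  by_cases hkl : k = l
  · subst hkl
    simp_rw [unit_sq]
    refine hg.mul_fun ∅ (u := Real.exp (q k k)) (v := 0) le_rfl (Real.exp_nonneg _) ?_ ?_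
    · intro t _; simp
    · intro t ht; simp at ht
  · refine hg.mul_fun {k, l} (u := Real.exp (q k l)) (v := Real.exp (-q k l)) (Real.exp_nonneg _)
      (Real.exp_le_exp.2 (by linarith [hq k l hkl])) ?_ ?_
    · intro t ht
      rw [Finset.prod_pair hkl] at ht
      have : ((t k : ℤ) : ℝ) * ((t l : ℤ) : ℝ) = (((t k * t l : ℤˣ) : ℤ) : ℝ) := by push_cast; rfl
      rw [this, ht]; simp
    · intro t ht
      rw [Finset.prod_pair hkl] at ht
      have : ((t k : ℤ) : ℝ) * ((t l : ℤ) : ℝ) = (((t k * t l : ℤˣ) : ℤ) : ℝ) := by push_cast; rfl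
      rw [this, ht]; simp

/-- Written in terms of the signs `t` of `1 - U` for fixed moduli `T = |1 - U|`, the Gibbs weight is
ferromagnetic. Off-diagonal entries of `M` give the pair couplings, the diagonal is constant because
`t k ^ 2 = 1`, and the external field is `-((∑ l, M k l) + f k) * T k ≥ 0`. -/
lemma heightWeight_charPos {m : ℕ} {M : Fin (m + 1) → Fin (m + 1) → ℝ} {f : Fin (m + 1) → ℝ}
    (hsymm : ∀ k l, M k l = M l k) (hM : ∀ k l, k ≠ l → 0 ≤ M k l)
    (hR : ∀ k, (∑ l, M k l) + f k ≤ 0) (T : Fin (m + 1) → ℕ) :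
    CharPos (fun t : Fin (m + 1) → ℤˣ =>
      heightWeight M f (fun k => 1 - (t k : ℤ) * (T k : ℤ))) := by
  set c0 : ℝ := 1 / 2 * (∑ k, ∑ l, M k l) + ∑ k, f k with hc0
  set p : Fin (m + 1) → ℝ := fun k => -((∑ l, M k l) + f k) * (T k : ℝ) with hp
  set q : Fin (m + 1) → Fin (m + 1) → ℝ := fun k l => 1 / 2 * M k l * ((T k : ℝ) * (T l : ℝ))
    with hq
  have hexp : ∀ t : Fin (m + 1) → ℤˣ,
      heightExp M f (fun k => 1 - (t k : ℤ) * (T k : ℤ))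
        = c0 + ∑ k, p k * ((t k : ℤ) : ℝ)
          + ∑ k, ∑ l, q k l * (((t k : ℤ) : ℝ) * ((t l : ℤ) : ℝ)) := by
    intro t
    have h1 : ∑ k, ∑ l, M k l * ((((1 - (t k : ℤ) * (T k : ℤ) : ℤ)) : ℝ)
          * (((1 - (t l : ℤ) * (T l : ℤ) : ℤ)) : ℝ))
        = (∑ k, ∑ l, M k l) - (∑ k, ∑ l, M k l * (((t k : ℤ) : ℝ) * T k))
          - (∑ k, ∑ l, M k l * (((t l : ℤ) : ℝ) * T l))
          + 2 * ∑ k, ∑ l, q k l * (((t k : ℤ) : ℝ) * ((t l : ℤ) : ℝ)) := by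
      simp only [Finset.mul_sum, ← Finset.sum_sub_distrib, ← Finset.sum_add_distrib]
      refine Finset.sum_congr rfl fun k _ => Finset.sum_congr rfl fun l _ => ?_
      simp only [hq]; push_cast; ring
    have h2 : (∑ k, ∑ l, M k l * (((t l : ℤ) : ℝ) * T l))
        = ∑ k, ∑ l, M k l * (((t k : ℤ) : ℝ) * T k) := by
      rw [Finset.sum_comm]
      refine Finset.sum_congr rfl fun k _ => Finset.sum_congr rfl fun l _ => ?_
      rw [hsymm]
    have h3 : ∑ k, f k * (((1 - (t k : ℤ) * (T k : ℤ) : ℤ)) : ℝ)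
        = ∑ k, f k - ∑ k, f k * (((t k : ℤ) : ℝ) * T k) := by
      rw [← Finset.sum_sub_distrib]
      refine Finset.sum_congr rfl fun k _ => ?_
      push_cast; ring
    have h4 : ∑ k, p k * ((t k : ℤ) : ℝ)
        = -(∑ k, ∑ l, M k l * (((t k : ℤ) : ℝ) * T k)) - ∑ k, f k * (((t k : ℤ) : ℝ) * T k) := by
      rw [← Finset.sum_neg_distrib, ← Finset.sum_sub_distrib]
      refine Finset.sum_congr rfl fun k _ => ?_
      rw [← Finset.sum_mul]; simp only [hp]; ring
    unfold heightExp
    rw [h1, h2, h3, h4, hc0]; ring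
  have hfac : (fun t : Fin (m + 1) → ℤˣ =>
      heightWeight M f (fun k => 1 - (t k : ℤ) * (T k : ℤ))) = fun t =>
        ((((Real.exp c0
          * if |1 - (t 0 : ℤ) * (T 0 : ℤ)| = 1 then (1 : ℝ) else 0)
          * if |1 - (t (Fin.last m) : ℤ) * (T (Fin.last m) : ℤ)| = 1 then (1 : ℝ) else 0)
          * ∏ j : Fin m, if |(1 - (t j.succ : ℤ) * (T j.succ : ℤ))
              - (1 - (t j.castSucc : ℤ) * (T j.castSucc : ℤ))| = 1 then (1 : ℝ) else 0)
          * ∏ k, Real.exp (p k * ((t k : ℤ) : ℝ)))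
          * ∏ x : Fin (m + 1) × Fin (m + 1),
              Real.exp (q x.1 x.2 * (((t x.1 : ℤ) : ℝ) * ((t x.2 : ℤ) : ℝ))) := by
    funext t
    rw [← Real.exp_sum, ← Real.exp_sum, Fintype.sum_prod_type]
    unfold heightWeight
    rw [hexp t, Real.exp_add, Real.exp_add, Finset.prod_ite_zero]
    simp only [Finset.mem_univ, forall_const, Finset.prod_const_one]
    by_cases a : |1 - (t 0 : ℤ) * (T 0 : ℤ)| = 1
    · by_cases b : |1 - (t (Fin.last m) : ℤ) * (T (Fin.last m) : ℤ)| = 1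
      · by_cases c : ∀ j : Fin m, |(1 - (t j.succ : ℤ) * (T j.succ : ℤ))
              - (1 - (t j.castSucc : ℤ) * (T j.castSucc : ℤ))| = 1
        · rw [if_pos (show IsHeight _ from ⟨a, b, c⟩), if_pos a, if_pos b, if_pos c]; ring
        · rw [if_neg (fun h : IsHeight _ => c h.2.2), if_neg c]
          ring
      · rw [if_neg (fun h : IsHeight _ => b h.2.1), if_neg b]; ring
    · rw [if_neg (fun h : IsHeight _ => a h.1), if_neg a]; ring
  rw [hfac]
  refine CharPos.mul_prod (CharPos.mul_prod (CharPos.mul_prod (charPos_boundary T _ _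
    (charPos_boundary T _ _ (charPos_const (Real.exp_nonneg c0)))) _ _ ?_) _ _ ?_) _ _ ?_
  · intro j _ g hg
    refine charPos_step T _ _ ?_ g hg
    exact (Fin.castSucc_lt_succ).ne'
  · intro k _ g hg
    refine charPos_exp_one (fun k => ?_) k g hg
    exact mul_nonneg (by linarith [hR k]) (Nat.cast_nonneg _)
  · intro x _ g hg
    refine charPos_exp_two (fun k l hkl => ?_) x.1 x.2 g hg
    have := hM k l hkl
    positivity

/-- The mean height is at most `1`. Averaging over all reflections of individual heights at the
level `1`, which preserve the box, reduces the claim to the first Griffiths inequality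
`heightWeight_charPos` with `A = {x}`. -/
lemma sum_box_nonpos {m : ℕ} {M : Fin (m + 1) → Fin (m + 1) → ℝ} {f : Fin (m + 1) → ℝ}
    (hsymm : ∀ k l, M k l = M l k) (hM : ∀ k l, k ≠ l → 0 ≤ M k l)
    (hR : ∀ k, (∑ l, M k l) + f k ≤ 0) (B : ℤ) (x : Fin (m + 1)) :
    ∑ U ∈ Fintype.piFinset (fun _ : Fin (m + 1) => Finset.Icc (1 - B) (1 + B)),
      heightWeight M f U * ((U x : ℝ) - 1) ≤ 0 := by
  set box := Fintype.piFinset (fun _ : Fin (m + 1) => Finset.Icc (1 - B) (1 + B)) with hbox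
  set F : (Fin (m + 1) → ℤ) → ℝ := fun U => heightWeight M f U * ((U x : ℝ) - 1) with hF
  let r : (Fin (m + 1) → ℤˣ) → (Fin (m + 1) → ℤ) → (Fin (m + 1) → ℤ) :=
    fun t U k => 1 + (t k : ℤ) * (U k - 1)
  have hr : ∀ t U, U ∈ box → r t U ∈ box := by
    intro t U hU
    rw [hbox, Fintype.mem_piFinset] at hU ⊢
    intro k
    have := hU k
    rw [Finset.mem_Icc] at this ⊢
    rcases Int.units_eq_one_or (t k) with h | h <;> simp [r, h] <;> constructor <;> linarith
  have hrr : ∀ t U, r t (r t U) = U := by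
    intro t U
    funext k
    rcases Int.units_eq_one_or (t k) with h | h <;> simp [r, h]
  have hinv : ∀ t, ∑ U ∈ box, F (r t U) = ∑ U ∈ box, F U := fun t =>
    Finset.sum_nbij' (r t) (r t) (hr t) (hr t) (fun U _ => hrr t U) (fun U _ => hrr t U)
      (fun U _ => rfl)
  have hU : ∀ U : Fin (m + 1) → ℤ, ∑ t, F (r t U) ≤ 0 := by
    intro U
    set T : Fin (m + 1) → ℕ := fun k => (U k - 1).natAbs with hT
    let e : Fin (m + 1) → ℤˣ := fun k => if 0 ≤ U k - 1 then -1 else 1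
    have he : ∀ k, (e k : ℤ) * (U k - 1) = -(T k : ℤ) := by
      intro k
      simp only [e, hT]
      split_ifs with h
      · simp [abs_of_nonneg h]
      · push Not at h; simp [abs_of_neg h]
    have hre : ∀ t, r (t * e) U = fun k => 1 - (t k : ℤ) * (T k : ℤ) := by
      intro t; funext k
      simp only [r, Pi.mul_apply, Units.val_mul, mul_assoc, he]; ring
    rw [← Equiv.sum_comp (Equiv.mulRight e)]
    have hg := heightWeight_charPos hsymm hM hR T {x}
    have : ∑ t, F (r (Equiv.mulRight e t) U) = -((T x : ℝ) * ∑ t : Fin (m + 1) → ℤˣ,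
        heightWeight M f (fun k => 1 - (t k : ℤ) * (T k : ℤ)) * ∏ i ∈ {x}, ((t i : ℤ) : ℝ)) := by
      rw [Finset.mul_sum, ← Finset.sum_neg_distrib]
      refine Finset.sum_congr rfl fun t _ => ?_
      simp only [Equiv.coe_mulRight, hre, hF, Finset.prod_singleton]
      push_cast; ring
    rw [this]
    have : (0:ℝ) ≤ T x := Nat.cast_nonneg _
    have := mul_nonneg this hg
    linarith
  have htot : ∑ t : Fin (m + 1) → ℤˣ, ∑ U ∈ box, F (r t U)
      = (Fintype.card (Fin (m + 1) → ℤˣ) : ℝ) * ∑ U ∈ box, F U := by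
    simp_rw [hinv]; rw [Finset.sum_const, nsmul_eq_mul, Finset.card_univ]
  rw [Finset.sum_comm] at htot
  have h1 : (Fintype.card (Fin (m + 1) → ℤˣ) : ℝ) * ∑ U ∈ box, F U ≤ 0 := by
    rw [← htot]; exact Finset.sum_nonpos fun U _ => hU U
  have h2 : (0 : ℝ) < (Fintype.card (Fin (m + 1) → ℤˣ) : ℝ) := by
    exact_mod_cast Fintype.card_pos
  by_contra hcon
  push Not at hcon
  have := mul_pos h2 hcon
  linarith

/-! ### Neutral colourings and their heights -/

/-- The colourings of `J` by `±1` with total charge zero. -/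
def neutral (J : Type*) [Fintype J] [DecidableEq J] : Finset (J → ℤˣ) :=
  Finset.univ.filter fun c => ∑ j, (c j : ℤ) = 0

lemma mem_neutral {J : Type*} [Fintype J] [DecidableEq J] {c : J → ℤˣ} :
    c ∈ neutral J ↔ ∑ j, (c j : ℤ) = 0 := by simp [neutral]

lemma neg_mem_neutral {J : Type*} [Fintype J] [DecidableEq J] {c : J → ℤˣ}
    (h : c ∈ neutral J) : -c ∈ neutral J := by
  rw [mem_neutral] at h ⊢; simp [h]

/-- The height of a colouring over the gap between positions `g` and `g + 1`, that is the total
charge of the positions `0, …, g`. -/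
def hgt {m : ℕ} (c : Fin (m + 2) → ℤˣ) (g : Fin (m + 1)) : ℤ :=
  Fin.partialSum (fun i => (c i : ℤ)) g.castSucc.succ

lemma partialSum_total {n : ℕ} (f : Fin n → ℤ) : Fin.partialSum f (Fin.last n) = ∑ i, f i := by
  have h : ∀ i, f i = Fin.partialSum f i.succ - Fin.partialSum f i.castSucc := by
    intro i; rw [Fin.partialSum_succ]; ring
  conv_rhs => rw [Finset.sum_congr rfl (fun i _ => h i)]
  rw [Finset.sum_sub_distrib]
  have h1 := Fin.sum_univ_succ (fun i => Fin.partialSum f i)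
  have h2 := Fin.sum_univ_castSucc (fun i => Fin.partialSum f i)
  rw [Fin.partialSum_zero] at h1
  linarith

lemma hgt_neg {m : ℕ} (c : Fin (m + 2) → ℤˣ) (g : Fin (m + 1)) : hgt (-c) g = - hgt c g := by
  unfold hgt
  generalize g.castSucc.succ = k
  induction k using Fin.induction with
  | zero => simp
  | succ i ih => rw [Fin.partialSum_succ, Fin.partialSum_succ, ih]; simp; ring

lemma abs_unit (u : ℤˣ) : |(u : ℤ)| = 1 := by
  rcases Int.units_eq_one_or u with h | h <;> simp [h]

lemma isHeight_hgt {m : ℕ} {c : Fin (m + 2) → ℤˣ} (hc : c ∈ neutral (Fin (m + 2))) :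
    IsHeight (hgt c) := by
  rw [mem_neutral] at hc
  refine ⟨?_, ?_, fun j => ?_⟩
  · unfold hgt
    rw [Fin.partialSum_succ]
    simp [abs_unit]
  · have h := partialSum_total (fun i => (c i : ℤ))
    rw [hc, ← Fin.succ_last, Fin.partialSum_succ, ← Fin.succ_last] at h
    unfold hgt
    rw [← Fin.succ_castSucc] at h
    rw [eq_neg_of_add_eq_zero_left h, abs_neg, abs_unit]
  · unfold hgt
    rw [Fin.partialSum_succ, ← Fin.succ_castSucc]
    simp [abs_unit]

lemma abs_partialSum_le {n : ℕ} (c : Fin n → ℤˣ) (k : Fin (n + 1)) :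
    |Fin.partialSum (fun i => (c i : ℤ)) k| ≤ (k : ℤ) := by
  induction k using Fin.induction with
  | zero => simp
  | succ i ih =>
    rw [Fin.partialSum_succ]
    refine (abs_add_le _ _).trans ?_
    rw [abs_unit]; simp at ih ⊢; exact ih

lemma hgt_injOn {m : ℕ} : Set.InjOn (hgt (m := m)) (neutral (Fin (m + 2))) := by
  intro c hc c' hc' h
  have hc := mem_neutral.1 (Finset.mem_coe.1 hc)
  have hc' := mem_neutral.1 (Finset.mem_coe.1 hc')
  have hS : ∀ k, Fin.partialSum (fun i => (c i : ℤ)) k = Fin.partialSum (fun i => (c' i : ℤ)) k := by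
    intro k
    induction k using Fin.cases with
    | zero => simp
    | succ i =>
      induction i using Fin.lastCases with
      | last => rw [Fin.succ_last, partialSum_total, partialSum_total, hc, hc']
      | cast g => exact congrFun h g
  funext i
  have h1 := hS i.succ
  rw [Fin.partialSum_succ, Fin.partialSum_succ, hS] at h1
  exact Units.ext (by linarith)

/-- Every lattice excursion is the height function of a neutral colouring, namely of its
increments. -/
lemma hgt_surj {m : ℕ} {U : Fin (m + 1) → ℤ} (hU : IsHeight U) :
    ∃ c ∈ neutral (Fin (m + 2)), hgt c = U := by
  let S : Fin (m + 3) → ℤ := Fin.cons 0 (Fin.snoc U 0)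
  have hS0 : S 0 = 0 := rfl
  have hSg : ∀ g : Fin (m + 1), S g.castSucc.succ = U g := by intro g; simp [S]
  have hSl : S (Fin.last (m + 2)) = 0 := by rw [← Fin.succ_last]; simp [S]
  have habs : ∀ i : Fin (m + 2), |S i.succ - S i.castSucc| = 1 := by
    intro i
    induction i using Fin.cases with
    | zero =>
      have : (Fin.succ 0 : Fin (m + 3)) = (0 : Fin (m + 1)).castSucc.succ := rfl
      rw [this, hSg, Fin.castSucc_zero, hS0, sub_zero]; exact hU.1
    | succ g =>
      rw [← Fin.succ_castSucc, hSg]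
      induction g using Fin.lastCases with
      | last => rw [Fin.succ_last, Fin.succ_last, hSl, zero_sub, abs_neg]; exact hU.2.1
      | cast j => rw [Fin.succ_castSucc j, hSg]; exact hU.2.2 j
  have hunit : ∀ i : Fin (m + 2), ∃ u : ℤˣ, (u : ℤ) = S i.succ - S i.castSucc := by
    intro i
    rcases (abs_eq (by norm_num : (0:ℤ) ≤ 1)).1 (habs i) with h | h
    · exact ⟨1, by rw [h]; rfl⟩
    · exact ⟨-1, by rw [h]; rfl⟩
  choose c hc using hunit
  have hps : ∀ k, Fin.partialSum (fun i => (c i : ℤ)) k = S k := by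
    intro k
    induction k using Fin.induction with
    | zero => simp [hS0]
    | succ i ih => rw [Fin.partialSum_succ, ih, hc]; ring
  refine ⟨c, ?_, ?_⟩
  · rw [mem_neutral, ← partialSum_total, hps, hSl]
  · funext g; rw [← hSg]; exact hps _

lemma sum_neutral_eq {m : ℕ} (F : (Fin (m + 1) → ℤ) → ℝ) :
    ∑ c ∈ neutral (Fin (m + 2)), F (hgt c)
      = ∑ U ∈ Fintype.piFinset
          (fun _ : Fin (m + 1) => Finset.Icc (1 - (m + 3 : ℤ)) (1 + (m + 3 : ℤ))),
          if IsHeight U then F U else 0 := by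
  rw [← Finset.sum_filter]
  refine Finset.sum_nbij hgt ?_ hgt_injOn ?_ (fun _ _ => rfl)
  · intro c hc
    rw [Finset.mem_filter, Fintype.mem_piFinset]
    refine ⟨fun g => ?_, isHeight_hgt hc⟩
    have h := abs_le.1 (abs_partialSum_le c g.castSucc.succ)
    have hg : ((g.castSucc.succ : Fin (m + 3)) : ℤ) ≤ m + 2 := by
      have := g.castSucc.succ.is_le; exact_mod_cast this
    rw [Finset.mem_Icc]
    constructor <;> unfold hgt <;> linarith [h.1, h.2]
  · intro U hU
    obtain ⟨c, hc, h⟩ := hgt_surj (Finset.mem_filter.1 (Finset.mem_coe.1 hU)).2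
    exact ⟨c, hc, h⟩

lemma sum_by_parts {m : ℕ} {c : Fin (m + 2) → ℤˣ} (hc : c ∈ neutral (Fin (m + 2)))
    (H : Fin (m + 2) → ℝ) :
    ∑ i, ((c i : ℤ) : ℝ) * H i = ∑ g : Fin (m + 1), (hgt c g : ℝ) * (H g.castSucc - H g.succ) := by
  set S : Fin (m + 3) → ℤ := Fin.partialSum (fun i => (c i : ℤ)) with hS
  have h0 : S 0 = 0 := Fin.partialSum_zero _
  have hl : S (Fin.last (m + 2)) = 0 := by rw [hS, partialSum_total]; exact mem_neutral.1 hc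
  have hci : ∀ i, ((c i : ℤ) : ℝ) = (S i.succ : ℝ) - (S i.castSucc : ℝ) := by
    intro i; rw [hS, Fin.partialSum_succ]; push_cast; ring
  simp_rw [hci, sub_mul, Finset.sum_sub_distrib]
  rw [Fin.sum_univ_castSucc]
  conv_lhs => arg 2; rw [Fin.sum_univ_succ]
  rw [Fin.succ_last, hl, Fin.castSucc_zero, h0]
  simp_rw [mul_sub, Finset.sum_sub_distrib, ← Fin.succ_castSucc]
  simp [hgt, hS]

/-! ### The log-gas energy in terms of heights -/

/-- The logarithmic kernel of the points `z`, with the value `γ` on the diagonal. Off the diagonal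
the second term vanishes, and on it `Real.log 0 = 0`. Since colours square to `1`, the choice of `γ`
only shifts the energy by a constant. -/
noncomputable def logKer {N : ℕ} (z : Fin N → ℝ) (γ : ℝ) (i j : Fin N) : ℝ :=
  Real.log |z i - z j| + if i = j then γ else 0

/-- The quadratic form of the energy in the heights: `κ` times the mixed second difference of
`logKer` over a pair of gaps. -/
noncomputable def heightMat {m : ℕ} (κ : ℝ) (z : Fin (m + 2) → ℝ) (γ : ℝ)
    (g h : Fin (m + 1)) : ℝ :=
  κ * ((logKer z γ g.castSucc h.castSucc - logKer z γ g.succ h.castSucc)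
    - (logKer z γ g.castSucc h.succ - logKer z γ g.succ h.succ))

lemma logKer_symm {N : ℕ} (z : Fin N → ℝ) (γ : ℝ) (i j : Fin N) :
    logKer z γ i j = logKer z γ j i := by
  unfold logKer; rw [abs_sub_comm]; simp [eq_comm]

lemma heightMat_symm {m : ℕ} (κ : ℝ) (z : Fin (m + 2) → ℝ) (γ : ℝ) (g h : Fin (m + 1)) :
    heightMat κ z γ g h = heightMat κ z γ h g := by
  unfold heightMat
  rw [logKer_symm z γ g.castSucc h.castSucc, logKer_symm z γ g.succ h.castSucc,
    logKer_symm z γ g.castSucc h.succ, logKer_symm z γ g.succ h.succ]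
  ring

lemma logKer_of_lt {N : ℕ} {z : Fin N → ℝ} (hz : StrictMono z) (γ : ℝ) {i j : Fin N} (h : i < j) :
    logKer z γ i j = Real.log (z j - z i) := by
  unfold logKer
  rw [if_neg h.ne, add_zero, abs_sub_comm, abs_of_pos (sub_pos.2 (hz h))]

lemma logKer_self {N : ℕ} (z : Fin N → ℝ) (γ : ℝ) (i : Fin N) : logKer z γ i i = γ := by
  simp [logKer]

/-- Off-diagonal entries are logarithms of cross ratios that are at least `1`; for adjacent gaps the
diagonal value `γ` enters with a negative sign, and `γ` is chosen very negative. -/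
lemma heightMat_nonneg {m : ℕ} {κ : ℝ} (hκ : 0 < κ) {z : Fin (m + 2) → ℝ} (hz : StrictMono z)
    {B γ : ℝ} (hB : ∀ i j, |Real.log (|z i - z j|)| ≤ B) (hγ : γ ≤ -(4 * B + 1))
    (g h : Fin (m + 1)) (hgh : g ≠ h) : 0 ≤ heightMat κ z γ g h := by
  wlog hlt : g < h generalizing g h
  · rw [heightMat_symm]
    exact this h g hgh.symm (lt_of_le_of_ne (not_lt.1 hlt) hgh.symm)
  have hab : g.castSucc < g.succ := Fin.castSucc_lt_succ
  have hcd : h.castSucc < h.succ := Fin.castSucc_lt_succ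
  have hbc : g.succ ≤ h.castSucc := by
    rw [Fin.le_def]; simp; exact hlt
  refine mul_nonneg hκ.le ?_
  rcases hbc.lt_or_eq with hbc | hbc
  · rw [logKer_of_lt hz γ (hab.trans hbc), logKer_of_lt hz γ hbc,
      logKer_of_lt hz γ (hab.trans (hbc.trans hcd)), logKer_of_lt hz γ (hbc.trans hcd)]
    have ha := hz hab
    have hb := hz hbc
    have hc := hz hcd
    set a := z g.castSucc
    set b := z g.succ
    set c := z h.castSucc
    set d := z h.succ
    have h1 : 0 < c - a := by linarith
    have h2 : 0 < d - b := by linarith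
    have h3 : 0 < c - b := by linarith
    have h4 : 0 < d - a := by linarith
    have : Real.log ((c - b) * (d - a)) ≤ Real.log ((c - a) * (d - b)) := by
      apply Real.log_le_log (by positivity)
      nlinarith [mul_pos (sub_pos.2 ha) (sub_pos.2 hc)]
    rw [Real.log_mul h3.ne' h4.ne', Real.log_mul h1.ne' h2.ne'] at this
    linarith
  · rw [← hbc, logKer_self]
    have h1 := (abs_le.1 (hB g.castSucc g.succ))
    have h2 := (abs_le.1 (hB g.castSucc h.succ))
    have h3 := (abs_le.1 (hB g.succ h.succ))
    unfold logKer
    rw [if_neg hab.ne, if_neg (hab.trans (hbc ▸ hcd)).ne, if_neg (hbc ▸ hcd).ne]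
    linarith [h1.1, h1.2, h2.1, h2.2, h3.1, h3.2]

lemma heightMat_row {m : ℕ} (κ : ℝ) (z : Fin (m + 2) → ℝ) (γ : ℝ) (g : Fin (m + 1)) :
    ∑ h, heightMat κ z γ g h
      = κ * ((logKer z γ g.castSucc 0 - logKer z γ g.succ 0)
        + (logKer z γ g.succ (Fin.last _) - logKer z γ g.castSucc (Fin.last _))) := by
  unfold heightMat
  rw [← Finset.mul_sum, Finset.sum_sub_distrib]
  congr 1
  have h1 := Fin.sum_univ_succ (fun i => logKer z γ g.castSucc i - logKer z γ g.succ i)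
  have h2 := Fin.sum_univ_castSucc (fun i => logKer z γ g.castSucc i - logKer z γ g.succ i)
  linarith

/-- The row sums telescope to the two extreme points, and the logarithm of a ratio of distances to
the leftmost point gains the gap length divided by `L`. -/
lemma heightMat_row_le {m : ℕ} {κ : ℝ} (hκ : 0 < κ) {z : Fin (m + 2) → ℝ} (hz : StrictMono z)
    {B γ L : ℝ} (hB : ∀ i j, |Real.log (|z i - z j|)| ≤ B) (hγ : γ ≤ -(4 * B + 1))
    (hL : ∀ i j, z i - z j ≤ L) (g : Fin (m + 1)) :
    ∑ h, heightMat κ z γ g h ≤ -(κ * ((z g.succ - z g.castSucc) / L)) := by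
  rw [heightMat_row, ← mul_neg]
  refine mul_le_mul_of_nonneg_left ?_ hκ.le
  have hab : g.castSucc < g.succ := Fin.castSucc_lt_succ
  have hδ := sub_pos.2 (hz hab)
  have hLpos : 0 < L := hδ.trans_le (hL _ _)
  have hB0 : 0 ≤ B := (abs_nonneg _).trans (hB 0 0)
  have h1 : logKer z γ g.castSucc 0 - logKer z γ g.succ 0
      ≤ -((z g.succ - z g.castSucc) / L) := by
    rw [logKer_symm z γ g.castSucc, logKer_symm z γ g.succ]
    rcases (Fin.zero_le g.castSucc).eq_or_lt with h0 | h0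
    · rw [← h0, logKer_self]
      have h2 := (abs_le.1 (hB 0 g.succ))
      have h3 : (z g.succ - z 0) / L ≤ 1 := (div_le_one hLpos).2 (hL _ _)
      unfold logKer
      rw [if_neg (h0 ▸ hab).ne]
      linarith [h2.1]
    · rw [logKer_of_lt hz γ h0, logKer_of_lt hz γ (h0.trans hab)]
      have ha := sub_pos.2 (hz h0)
      have hb := sub_pos.2 (hz (h0.trans hab))
      rw [← Real.log_div ha.ne' hb.ne']
      refine (Real.log_le_sub_one_of_pos (div_pos ha hb)).trans ?_
      have : (z g.succ - z g.castSucc) / L ≤ (z g.succ - z g.castSucc) / (z g.succ - z 0) :=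
        div_le_div_of_nonneg_left hδ.le hb (hL _ _)
      have e : (z g.castSucc - z 0) / (z g.succ - z 0) - 1
          = -((z g.succ - z g.castSucc) / (z g.succ - z 0)) := by
        field_simp; ring
      rw [e]; linarith
  have h2 : logKer z γ g.succ (Fin.last _) - logKer z γ g.castSucc (Fin.last _) ≤ 0 := by
    rcases (Fin.le_last g.succ).eq_or_lt with h0 | h0
    · rw [← h0, logKer_self]
      have h2 := (abs_le.1 (hB g.castSucc g.succ))
      unfold logKer
      rw [if_neg hab.ne]
      linarith [h2.1]
    · rw [logKer_of_lt hz γ h0, logKer_of_lt hz γ (hab.trans h0)]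
      have := Real.log_le_log (sub_pos.2 (hz h0))
        (by linarith : z (Fin.last _) - z g.succ ≤ z (Fin.last _) - z g.castSucc)
      linarith
  linarith

/-- The interaction exponent `(κ/2) ∑_{i,j} c_i c_j log |z_i - z_j|` of a colouring. Diagonal terms
vanish because `Real.log 0 = 0`. -/
noncomputable def pairEnergy {J : Type*} [Fintype J] (κ : ℝ) (z : J → ℝ) (c : J → ℤˣ) : ℝ :=
  κ / 2 * ∑ i, ∑ j, ((c i : ℤ) : ℝ) * ((c j : ℤ) : ℝ) * Real.log |z i - z j|

/-- The linear statistic of `φ` over points coloured `1` minus that over points coloured `-1`. -/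
noncomputable def linStat {J : Type*} [Fintype J] (φ : ℝ → ℝ) (z : J → ℝ) (c : J → ℤˣ) : ℝ :=
  ∑ i, ((c i : ℤ) : ℝ) * φ (z i)

lemma pairEnergy_neg {J : Type*} [Fintype J] (κ : ℝ) (z : J → ℝ) (c : J → ℤˣ) :
    pairEnergy κ z (-c) = pairEnergy κ z c := by simp [pairEnergy]

lemma linStat_neg {J : Type*} [Fintype J] (φ : ℝ → ℝ) (z : J → ℝ) (c : J → ℤˣ) :
    linStat φ z (-c) = -linStat φ z c := by simp [linStat]

lemma linStat_eq {m : ℕ} (φ : ℝ → ℝ) (z : Fin (m + 2) → ℝ) {c : Fin (m + 2) → ℤˣ}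
    (hc : c ∈ neutral (Fin (m + 2))) :
    linStat φ z c = ∑ g : Fin (m + 1), (hgt c g : ℝ) * (φ (z g.castSucc) - φ (z g.succ)) :=
  sum_by_parts hc (fun i => φ (z i))

lemma pairEnergy_eq {m : ℕ} (κ γ θ : ℝ) (φ : ℝ → ℝ) (z : Fin (m + 2) → ℝ)
    {c : Fin (m + 2) → ℤˣ} (hc : c ∈ neutral (Fin (m + 2))) :
    pairEnergy κ z c + θ * linStat φ z c + κ / 2 * ((m + 2 : ℕ) * γ)
      = heightExp (heightMat κ z γ) (fun g => θ * (φ (z g.castSucc) - φ (z g.succ))) (hgt c) := by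
  have h1 : ∑ i, ∑ j, ((c i : ℤ) : ℝ) * ((c j : ℤ) : ℝ) * logKer z γ i j
      = (∑ i, ∑ j, ((c i : ℤ) : ℝ) * ((c j : ℤ) : ℝ) * Real.log |z i - z j|)
        + (m + 2 : ℕ) * γ := by
    simp only [logKer, mul_add, Finset.sum_add_distrib, mul_ite, mul_zero, Finset.sum_ite_eq,
      Finset.mem_univ, if_true, unit_sq, one_mul]
    simp
  have h2 : ∑ i, ∑ j, ((c i : ℤ) : ℝ) * ((c j : ℤ) : ℝ) * logKer z γ i j
      = ∑ g : Fin (m + 1), ∑ h : Fin (m + 1), (hgt c g : ℝ) * (hgt c h : ℝ)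
        * ((logKer z γ g.castSucc h.castSucc - logKer z γ g.succ h.castSucc)
          - (logKer z γ g.castSucc h.succ - logKer z γ g.succ h.succ)) := by
    have e1 : ∀ i, ∑ j, ((c i : ℤ) : ℝ) * ((c j : ℤ) : ℝ) * logKer z γ i j
        = ((c i : ℤ) : ℝ) * ∑ h : Fin (m + 1), (hgt c h : ℝ)
          * (logKer z γ i h.castSucc - logKer z γ i h.succ) := by
      intro i
      rw [← sum_by_parts hc, Finset.mul_sum]
      exact Finset.sum_congr rfl fun j _ => by ring
    simp_rw [e1]
    rw [sum_by_parts hc]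
    refine Finset.sum_congr rfl fun g _ => ?_
    rw [← Finset.sum_sub_distrib, Finset.mul_sum]
    exact Finset.sum_congr rfl fun h _ => by ring
  unfold heightExp
  rw [linStat_eq φ z hc]
  unfold pairEnergy
  have h3 : κ / 2 * (∑ i, ∑ j, ((c i : ℤ) : ℝ) * ((c j : ℤ) : ℝ) * Real.log |z i - z j|)
      + κ / 2 * ((m + 2 : ℕ) * γ)
      = 1 / 2 * ∑ k, ∑ l, heightMat κ z γ k l * ((hgt c k : ℝ) * (hgt c l : ℝ)) := by
    rw [← mul_add, ← h1, h2, Finset.mul_sum, Finset.mul_sum]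
    refine Finset.sum_congr rfl fun g _ => ?_
    rw [Finset.mul_sum, Finset.mul_sum]
    exact Finset.sum_congr rfl fun h _ => by unfold heightMat; ring
  have h4 : θ * ∑ g : Fin (m + 1), (hgt c g : ℝ) * (φ (z g.castSucc) - φ (z g.succ))
      = ∑ g : Fin (m + 1), θ * (φ (z g.castSucc) - φ (z g.succ)) * (hgt c g : ℝ) := by
    rw [Finset.mul_sum]; exact Finset.sum_congr rfl fun g _ => by ring
  rw [← h3, ← h4]; ring

/-- Under the colouring weights tilted by `exp (θ X)`, the mean height is at most `1`: the tilt acts as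
a field of size at most `|θ| K` times the gap length, which the negative row sums absorb. -/
lemma mean_hgt_le {m : ℕ} {κ K L θ : ℝ} (hκ : 0 < κ) (hK : 0 < K) {z : Fin (m + 2) → ℝ}
    (hz : StrictMono z) (hL : ∀ i j, z i - z j ≤ L) {φ : ℝ → ℝ}
    (hφ : ∀ i j, |φ (z i) - φ (z j)| ≤ K * |z i - z j|) (hθ : |θ| ≤ κ / (K * L))
    (g : Fin (m + 1)) :
    ∑ c ∈ neutral (Fin (m + 2)),
      Real.exp (pairEnergy κ z c + θ * linStat φ z c) * ((hgt c g : ℝ) - 1) ≤ 0 := by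
  set B : ℝ := ∑ i, ∑ j, |Real.log (|z i - z j|)| with hBdef
  have hB : ∀ i j, |Real.log (|z i - z j|)| ≤ B := by
    intro i j
    refine (Finset.single_le_sum (f := fun j => |Real.log (|z i - z j|)|)
      (fun _ _ => abs_nonneg _) (Finset.mem_univ j)).trans ?_
    exact Finset.single_le_sum (f := fun i => ∑ j, |Real.log (|z i - z j|)|)
      (fun _ _ => Finset.sum_nonneg fun _ _ => abs_nonneg _) (Finset.mem_univ i)
  set γ : ℝ := -(4 * B + 1) with hγ
  set M := heightMat κ z γ with hM
  set f : Fin (m + 1) → ℝ := fun g => θ * (φ (z g.castSucc) - φ (z g.succ)) with hf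
  have hR : ∀ k, (∑ l, M k l) + f k ≤ 0 := by
    intro k
    have h1 := heightMat_row_le hκ hz hB hγ.le hL k
    have hδ := sub_pos.2 (hz (Fin.castSucc_lt_succ (i := k)))
    have hLpos : 0 < L := hδ.trans_le (hL _ _)
    have h2 : f k ≤ κ * ((z k.succ - z k.castSucc) / L) := by
      calc f k ≤ |θ| * |φ (z k.castSucc) - φ (z k.succ)| := by
            rw [← abs_mul]; exact le_abs_self _
        _ ≤ κ / (K * L) * (K * (z k.succ - z k.castSucc)) := by
            refine mul_le_mul hθ ?_ (abs_nonneg _) (by positivity)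
            refine (hφ _ _).trans_eq ?_
            rw [abs_sub_comm, abs_of_pos hδ]
        _ = κ * ((z k.succ - z k.castSucc) / L) := by field_simp
    linarith
  have hbox := sum_box_nonpos (heightMat_symm κ z γ) (heightMat_nonneg hκ hz hB hγ.le) hR (m + 3) g
  have heq := sum_neutral_eq (m := m) (fun U => Real.exp (heightExp M f U) * ((U g : ℝ) - 1))
  have : ∑ c ∈ neutral (Fin (m + 2)), Real.exp (heightExp M f (hgt c)) * ((hgt c g : ℝ) - 1)
      ≤ 0 := by
    rw [heq]
    refine le_trans (le_of_eq ?_) hbox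
    refine Finset.sum_congr rfl fun U _ => ?_
    unfold heightWeight
    split_ifs <;> simp [hM]
  have h2 : ∑ c ∈ neutral (Fin (m + 2)), Real.exp (heightExp M f (hgt c)) * ((hgt c g : ℝ) - 1)
      = Real.exp (κ / 2 * ((m + 2 : ℕ) * γ)) * ∑ c ∈ neutral (Fin (m + 2)),
      Real.exp (pairEnergy κ z c + θ * linStat φ z c) * ((hgt c g : ℝ) - 1) := by
    rw [Finset.mul_sum]
    refine Finset.sum_congr rfl fun c hc => ?_
    rw [hM, hf, ← pairEnergy_eq κ γ θ φ z hc, Real.exp_add]; ring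
  rw [h2] at this
  exact nonpos_of_mul_nonpos_right this (Real.exp_pos _)

lemma sum_neutral_neg {J : Type*} [Fintype J] [DecidableEq J] (F : (J → ℤˣ) → ℝ) :
    ∑ c ∈ neutral J, F (-c) = ∑ c ∈ neutral J, F c :=
  Finset.sum_nbij' (fun c => -c) (fun c => -c) (fun _ h => neg_mem_neutral h)
    (fun _ h => neg_mem_neutral h) (fun _ _ => neg_neg _) (fun _ _ => neg_neg _) (fun _ _ => rfl)

lemma abs_mean_hgt_le {m : ℕ} {κ K L θ : ℝ} (hκ : 0 < κ) (hK : 0 < K) {z : Fin (m + 2) → ℝ}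
    (hz : StrictMono z) (hL : ∀ i j, z i - z j ≤ L) {φ : ℝ → ℝ}
    (hφ : ∀ i j, |φ (z i) - φ (z j)| ≤ K * |z i - z j|) (hθ : |θ| ≤ κ / (K * L))
    (g : Fin (m + 1)) :
    |∑ c ∈ neutral (Fin (m + 2)), Real.exp (pairEnergy κ z c + θ * linStat φ z c) * (hgt c g : ℝ)|
      ≤ ∑ c ∈ neutral (Fin (m + 2)), Real.exp (pairEnergy κ z c + θ * linStat φ z c) := by
  have h1 := mean_hgt_le hκ hK hz hL hφ hθ g
  have h2 := mean_hgt_le (θ := -θ) hκ hK hz hL hφ (by rwa [abs_neg]) g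
  rw [← sum_neutral_neg] at h2
  simp only [pairEnergy_neg, linStat_neg, hgt_neg, neg_mul, neg_neg, mul_sub, mul_one,
    Finset.sum_sub_distrib, Int.cast_neg, mul_neg, Finset.sum_neg_distrib] at h1 h2
  rw [abs_le]
  constructor <;> linarith

/-- Summation by parts turns the bound by `1` on the tilted mean heights into a bound by `K L` on the
tilted mean of the linear statistic. -/
lemma mean_linStat_le {m : ℕ} {κ K L θ : ℝ} (hκ : 0 < κ) (hK : 0 < K) {z : Fin (m + 2) → ℝ}
    (hz : StrictMono z) (hL : ∀ i j, z i - z j ≤ L) {φ : ℝ → ℝ}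
    (hφ : ∀ i j, |φ (z i) - φ (z j)| ≤ K * |z i - z j|) (hθ : |θ| ≤ κ / (K * L)) :
    ∑ c ∈ neutral (Fin (m + 2)),
        Real.exp (pairEnergy κ z c + θ * linStat φ z c) * linStat φ z c
      ≤ K * L * ∑ c ∈ neutral (Fin (m + 2)), Real.exp (pairEnergy κ z c + θ * linStat φ z c) := by
  set w : (Fin (m + 2) → ℤˣ) → ℝ := fun c => Real.exp (pairEnergy κ z c + θ * linStat φ z c)
  set Z := ∑ c ∈ neutral (Fin (m + 2)), w c with hZ
  have hZ0 : 0 ≤ Z := Finset.sum_nonneg fun c _ => Real.exp_nonneg _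
  have h1 : ∑ c ∈ neutral (Fin (m + 2)), w c * linStat φ z c
      = ∑ g : Fin (m + 1), (φ (z g.castSucc) - φ (z g.succ))
        * ∑ c ∈ neutral (Fin (m + 2)), w c * (hgt c g : ℝ) := by
    simp_rw [Finset.mul_sum]
    rw [Finset.sum_comm]
    refine Finset.sum_congr rfl fun c hc => ?_
    rw [linStat_eq φ z hc, Finset.mul_sum]
    exact Finset.sum_congr rfl fun g _ => by ring
  rw [h1]
  have h2 : ∀ g : Fin (m + 1), (φ (z g.castSucc) - φ (z g.succ))
        * ∑ c ∈ neutral (Fin (m + 2)), w c * (hgt c g : ℝ)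
      ≤ K * (z g.succ - z g.castSucc) * Z := by
    intro g
    have hδ := sub_pos.2 (hz (Fin.castSucc_lt_succ (i := g)))
    refine (le_abs_self _).trans ?_
    rw [abs_mul]
    refine mul_le_mul ?_ (abs_mean_hgt_le hκ hK hz hL hφ hθ g) (abs_nonneg _) (by positivity)
    refine (hφ _ _).trans_eq ?_
    rw [abs_sub_comm, abs_of_pos hδ]
  refine (Finset.sum_le_sum fun g _ => h2 g).trans ?_
  rw [← Finset.sum_mul, ← Finset.mul_sum]
  refine mul_le_mul_of_nonneg_right (mul_le_mul_of_nonneg_left ?_ hK.le) hZ0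
  rw [Finset.sum_sub_distrib]
  have e1 := Fin.sum_univ_succ z
  have e2 := Fin.sum_univ_castSucc z
  have := hL (Fin.last _) 0
  linarith

/-- Integrating the bound on the logarithmic derivative of `θ ↦ ∑_c exp (E_c + θ X_c)` up to
`θ₀ = κ / (K L)` gives an exponential moment of the linear statistic, hence a second moment. -/
lemma sum_sq_le_of_strictMono {m : ℕ} {κ K L : ℝ} (hκ : 0 < κ) (hK : 0 < K) (hLpos : 0 < L)
    {z : Fin (m + 2) → ℝ}
    (hz : StrictMono z) (hL : ∀ i j, z i - z j ≤ L) {φ : ℝ → ℝ}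
    (hφ : ∀ i j, |φ (z i) - φ (z j)| ≤ K * |z i - z j|) :
    ∑ c ∈ neutral (Fin (m + 2)), Real.exp (pairEnergy κ z c) * linStat φ z c ^ 2
      ≤ 4 * (K * L / κ) ^ 2 * Real.exp κ
        * ∑ c ∈ neutral (Fin (m + 2)), Real.exp (pairEnergy κ z c) := by
  set θ₀ := κ / (K * L) with hθ₀
  have hθpos : 0 < θ₀ := by positivity
  set F : ℝ → ℝ := fun θ => ∑ c ∈ neutral (Fin (m + 2)),
    Real.exp (pairEnergy κ z c + θ * linStat φ z c) with hF
  have hder : ∀ θ, HasDerivAt (fun θ => F θ * Real.exp (-(K * L * θ)))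
      ((∑ c ∈ neutral (Fin (m + 2)),
        Real.exp (pairEnergy κ z c + θ * linStat φ z c) * linStat φ z c)
        * Real.exp (-(K * L * θ)) + F θ * (Real.exp (-(K * L * θ)) * -(K * L))) θ := by
    intro θ
    refine HasDerivAt.mul ?_ ?_
    · refine HasDerivAt.fun_sum fun c _ => ?_
      refine HasDerivAt.exp ?_
      simpa using ((hasDerivAt_id θ).mul_const (linStat φ z c)).const_add (pairEnergy κ z c)
    · refine HasDerivAt.exp ?_
      simpa using ((hasDerivAt_id θ).const_mul (K * L)).fun_neg
  have hanti : AntitoneOn (fun θ => F θ * Real.exp (-(K * L * θ))) (Set.Icc 0 θ₀) := by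
    refine antitoneOn_of_deriv_nonpos (convex_Icc _ _)
      (fun θ _ => (hder θ).continuousAt.continuousWithinAt)
      (fun θ _ => (hder θ).differentiableAt.differentiableWithinAt) ?_
    intro θ hθ
    rw [interior_Icc] at hθ
    rw [(hder θ).deriv]
    have h := mean_linStat_le (θ := θ) hκ hK hz hL hφ (by rw [abs_of_pos hθ.1]; exact hθ.2.le)
    have h2 := mul_le_mul_of_nonneg_right h (Real.exp_nonneg (-(K * L * θ)))
    have : F θ = ∑ c ∈ neutral (Fin (m + 2)),
      Real.exp (pairEnergy κ z c + θ * linStat φ z c) := rfl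
    rw [← this] at h2
    linarith
  have h0 := hanti (Set.left_mem_Icc.2 hθpos.le) (Set.right_mem_Icc.2 hθpos.le) hθpos.le
  have hKL : K * L * θ₀ = κ := by rw [hθ₀]; field_simp
  simp only [mul_zero, neg_zero, Real.exp_zero, mul_one, hKL] at h0
  have hF1 : F θ₀ ≤ Real.exp κ * F 0 := by
    rw [Real.exp_neg] at h0
    rw [← div_eq_mul_inv, div_le_iff₀ (Real.exp_pos _)] at h0
    linarith
  have hF0 : F 0 = ∑ c ∈ neutral (Fin (m + 2)), Real.exp (pairEnergy κ z c) := by simp [hF]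
  have hFneg : ∑ c ∈ neutral (Fin (m + 2)), Real.exp (pairEnergy κ z c - θ₀ * linStat φ z c)
      = F θ₀ := by
    rw [← sum_neutral_neg]
    simp [hF, pairEnergy_neg, linStat_neg]
  rw [← hF0]
  have hpt : ∀ c : Fin (m + 2) → ℤˣ, Real.exp (pairEnergy κ z c) * linStat φ z c ^ 2
      ≤ 2 * (1 / θ₀) ^ 2 * (Real.exp (pairEnergy κ z c + θ₀ * linStat φ z c)
        + Real.exp (pairEnergy κ z c - θ₀ * linStat φ z c)) := by
    intro c
    set y := θ₀ * linStat φ z c with hy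
    have h1 : y ^ 2 ≤ 2 * (Real.exp y + Real.exp (-y)) := by
      have ha := Real.quadratic_le_exp_of_nonneg (abs_nonneg y)
      rw [sq_abs] at ha
      have hb := Real.exp_pos y
      have hc := Real.exp_pos (-y)
      rcases abs_choice y with h | h <;> rw [h] at ha <;>
        linarith [abs_nonneg y, h ▸ abs_nonneg y]
    have h2 : linStat φ z c ^ 2 = (1 / θ₀) ^ 2 * y ^ 2 := by
      rw [hy]; field_simp
    rw [h2, Real.exp_add, sub_eq_add_neg, Real.exp_add, ← mul_add]
    have h3 := mul_le_mul_of_nonneg_left h1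
      (mul_nonneg (Real.exp_nonneg (pairEnergy κ z c)) (sq_nonneg (1 / θ₀)))
    linarith
  refine (Finset.sum_le_sum fun c _ => hpt c).trans ?_
  rw [← Finset.mul_sum, Finset.sum_add_distrib, hFneg]
  have e : (K * L / κ) = 1 / θ₀ := by rw [hθ₀]; field_simp
  rw [e]
  have h5 : 2 * (1 / θ₀) ^ 2 * (F θ₀ + F θ₀) = 4 * (1 / θ₀) ^ 2 * F θ₀ := by ring
  have : F θ₀ = ∑ c ∈ neutral (Fin (m + 2)),
      Real.exp (pairEnergy κ z c + θ₀ * linStat φ z c) := rfl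
  rw [← this, h5, mul_assoc (4 * (1 / θ₀) ^ 2)]
  exact mul_le_mul_of_nonneg_left hF1 (by positivity)

/-- The second moment bound for distinct points in arbitrary order, obtained by sorting them. -/
lemma sum_sq_le_of_injective {J : Type*} [Fintype J] [DecidableEq J] {m : ℕ}
    (hJ : Fintype.card J = m + 2) {κ K L : ℝ} (hκ : 0 < κ) (hK : 0 < K) (hLpos : 0 < L)
    {z : J → ℝ} (hz : Function.Injective z) (hL : ∀ i j, z i - z j ≤ L) {φ : ℝ → ℝ}
    (hφ : ∀ i j, |φ (z i) - φ (z j)| ≤ K * |z i - z j|) :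
    ∑ c ∈ neutral J, Real.exp (pairEnergy κ z c) * linStat φ z c ^ 2
      ≤ 4 * (K * L / κ) ^ 2 * Real.exp κ * ∑ c ∈ neutral J, Real.exp (pairEnergy κ z c) := by
  let e₀ : Fin (m + 2) ≃ J := (Fintype.equivFinOfCardEq hJ).symm
  let e : Fin (m + 2) ≃ J := (Tuple.sort (z ∘ e₀)).trans e₀
  have hmono : StrictMono (z ∘ e) :=
    (Tuple.monotone_sort (z ∘ e₀)).strictMono_of_injective (hz.comp e.injective)
  have hE : ∀ c : J → ℤˣ, pairEnergy κ (z ∘ e) (c ∘ e) = pairEnergy κ z c := by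
    intro c
    unfold pairEnergy
    rw [← e.sum_comp (fun i => ∑ j, ((c i : ℤ) : ℝ) * ((c j : ℤ) : ℝ) * Real.log |z i - z j|)]
    congr 1
    refine Finset.sum_congr rfl fun i _ => ?_
    exact e.sum_comp (fun j => ((c (e i) : ℤ) : ℝ) * ((c j : ℤ) : ℝ) * Real.log |z (e i) - z j|)
  have hX : ∀ c : J → ℤˣ, linStat φ (z ∘ e) (c ∘ e) = linStat φ z c := fun c =>
    e.sum_comp (fun i => ((c i : ℤ) : ℝ) * φ (z i))
  have hS : ∀ F : (Fin (m + 2) → ℤˣ) → ℝ,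
      ∑ c ∈ neutral (Fin (m + 2)), F c = ∑ c ∈ neutral J, F (c ∘ e) := by
    intro F
    refine Finset.sum_nbij' (fun c => c ∘ e.symm) (fun c => c ∘ e) ?_ ?_ ?_ ?_ ?_
    · intro c hc
      rw [mem_neutral] at hc ⊢
      exact (e.symm.sum_comp (fun i => ((c i : ℤ)))).trans hc
    · intro c hc
      rw [mem_neutral] at hc ⊢
      exact (e.sum_comp (fun i => ((c i : ℤ)))).trans hc
    · intro c _; ext i; simp
    · intro c _; ext i; simp
    · intro c _; congr 1; ext i; simp
  have h := sum_sq_le_of_strictMono hκ hK hLpos hmono (fun i j => hL (e i) (e j))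
    (fun i j => hφ (e i) (e j))
  rw [hS, hS] at h
  simpa only [hE, hX] using h

/-! ### Symmetrization over the colourings of two merged replicas -/

/-- The joint weight of two replicas whose merged points are `z`, the point `z j` belonging to the
replica `c j`: one-body factors `E`, and repulsion `|z i - z j| ^ β` for each pair of equal colours.
The product runs over ordered pairs, whence the exponent `β / 2`. -/
noncomputable def colWeight {J : Type*} [Fintype J] [DecidableEq J] (β : ℝ) (E : ℝ → ℝ)
    (c : J → ℤˣ) (z : J → ℝ) : ℝ :=
  (∏ j, E (z j)) * ∏ i, ∏ j, if i ≠ j ∧ c i = c j then |z i - z j| ^ (β / 2) else 1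

/-- Up to a factor depending only on `z`, the weight of a colouring is `exp (pairEnergy (β / 2) z c)`,
because `1 + c i * c j` is `2` for equal colours and `0` for different ones. -/
lemma colWeight_eq_exp {J : Type*} [Fintype J] [DecidableEq J] (β : ℝ) (E : ℝ → ℝ)
    (c : J → ℤˣ) {z : J → ℝ} (hz : Function.Injective z) :
    colWeight β E c z = ((∏ j, E (z j)) * Real.exp (β / 4 * ∑ i, ∑ j, Real.log |z i - z j|))
      * Real.exp (pairEnergy (β / 2) z c) := by
  unfold colWeight pairEnergy
  rw [mul_assoc, ← Real.exp_add]
  congr 1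
  rw [show β / 2 / 2 = β / 4 by ring, ← mul_add, ← Finset.sum_add_distrib, Finset.mul_sum,
    Real.exp_sum]
  refine Finset.prod_congr rfl fun i _ => ?_
  rw [← Finset.sum_add_distrib, Finset.mul_sum, Real.exp_sum]
  refine Finset.prod_congr rfl fun j _ => ?_
  by_cases hij : i = j
  · simp [hij]
  · have hpos : 0 < |z i - z j| := abs_pos.2 (sub_ne_zero.2 fun h => hij (hz h))
    by_cases hc : c i = c j
    · rw [if_pos ⟨hij, hc⟩, hc, unit_sq, Real.rpow_def_of_pos hpos]
      congr 1; ring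
    · rw [if_neg (fun h => hc h.2)]
      have : ((c i : ℤ) : ℝ) * ((c j : ℤ) : ℝ) = -1 := by
        rcases Int.units_eq_one_or (c i) with h1 | h1 <;>
          rcases Int.units_eq_one_or (c j) with h2 | h2 <;> simp_all
      rw [this]; simp

lemma colWeight_comp {J : Type*} [Fintype J] [DecidableEq J] (β : ℝ) (E : ℝ → ℝ)
    (c : J → ℤˣ) (z : J → ℝ) (π : Equiv.Perm J) :
    colWeight β E (c ∘ π) (z ∘ π) = colWeight β E c z := by
  unfold colWeight
  congr 1
  · exact Equiv.prod_comp π (fun j => E (z j))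
  · rw [← Equiv.prod_comp π
      (fun i => ∏ j, if i ≠ j ∧ c i = c j then |z i - z j| ^ (β / 2) else 1)]
    refine Finset.prod_congr rfl fun i _ => ?_
    rw [← Equiv.prod_comp π
      (fun j => if π i ≠ j ∧ c (π i) = c j then |z (π i) - z j| ^ (β / 2) else 1)]
    simp

lemma linStat_comp {J : Type*} [Fintype J] (φ : ℝ → ℝ)
    (c : J → ℤˣ) (z : J → ℝ) (π : Equiv.Perm J) :
    linStat φ (z ∘ π) (c ∘ π) = linStat φ z c :=
  Equiv.sum_comp π (fun i => ((c i : ℤ) : ℝ) * φ (z i))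

lemma colWeight_nonneg {J : Type*} [Fintype J] [DecidableEq J] (β : ℝ) {E : ℝ → ℝ}
    (hE : ∀ x, 0 < E x) (c : J → ℤˣ) (z : J → ℝ) : 0 ≤ colWeight β E c z := by
  refine mul_nonneg (Finset.prod_nonneg fun j _ => (hE _).le)
    (Finset.prod_nonneg fun i _ => Finset.prod_nonneg fun j _ => ?_)
  split_ifs
  · positivity
  · exact zero_le_one

/-- The colouring of `Fin n ⊕ Fin n` in which the left copy has colour `1` and the right copy
`-1`. -/
def baseCol (n : ℕ) : Fin n ⊕ Fin n → ℤˣ := Sum.elim (fun _ => 1) (fun _ => -1)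

lemma baseCol_mem (n : ℕ) : baseCol n ∈ neutral (Fin n ⊕ Fin n) := by
  rw [mem_neutral]; simp [baseCol]

lemma exists_perm_of_neutral {n : ℕ} {c : Fin n ⊕ Fin n → ℤˣ}
    (hc : c ∈ neutral (Fin n ⊕ Fin n)) : ∃ π : Equiv.Perm (Fin n ⊕ Fin n), c = baseCol n ∘ π := by
  have hcard : ∀ c : Fin n ⊕ Fin n → ℤˣ, c ∈ neutral (Fin n ⊕ Fin n) → ∀ u : ℤˣ,
      Fintype.card {j // c j = u} = n := by
    intro c hc u
    rw [mem_neutral] at hc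
    have h1 : ∑ j, (1 + (u : ℤ) * (c j : ℤ)) = 2 * (Fintype.card {j // c j = u} : ℤ) := by
      rw [Fintype.card_subtype, Finset.card_filter]
      push_cast
      rw [Finset.mul_sum]
      refine Finset.sum_congr rfl fun j _ => ?_
      rcases Int.units_eq_one_or (c j) with h | h <;>
        rcases Int.units_eq_one_or u with h' | h' <;> rw [h, h'] <;> simp
    rw [Finset.sum_add_distrib, ← Finset.mul_sum, hc] at h1
    simp at h1
    omega
  have hf : ∀ u : ℤˣ, Nonempty ({j // c j = u} ≃ {j // baseCol n j = u}) := fun u =>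
    ⟨Fintype.equivOfCardEq ((hcard c hc u).trans (hcard _ (baseCol_mem n) u).symm)⟩
  refine ⟨Equiv.ofFiberEquiv fun u => (hf u).some, ?_⟩
  funext j
  exact (Equiv.ofFiberEquiv_map (fun u => (hf u).some) j).symm

lemma setIntegral_comp_perm {J : Type*} [Fintype J] (S : Set ℝ) (F : (J → ℝ) → ℝ)
    (π : Equiv.Perm J) :
    ∫ z in Set.univ.pi (fun _ : J => S), F (z ∘ π) = ∫ z in Set.univ.pi (fun _ : J => S), F z := by
  have hmp := volume_measurePreserving_piCongrLeft (fun _ : J => ℝ) π.symm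
  have hfun : ∀ z : J → ℝ, MeasurableEquiv.piCongrLeft (fun _ : J => ℝ) π.symm z = z ∘ π := by
    intro z; funext i
    have := MeasurableEquiv.piCongrLeft_apply_apply (β := fun _ : J => ℝ) π.symm z (π i)
    simpa using this
  have h := hmp.setIntegral_preimage_emb (MeasurableEquiv.measurableEmbedding _) F
    (Set.univ.pi (fun _ : J => S))
  rw [← h]
  simp only [hfun]
  congr 2
  ext z
  simp only [Set.mem_preimage, hfun, Set.mem_univ_pi, Function.comp]
  exact ⟨fun h i => h _, fun h i => by simpa using h (π.symm i)⟩

lemma ae_injective {J : Type*} [Fintype J] [DecidableEq J] :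
    ∀ᵐ z : J → ℝ, Function.Injective z := by
  have h : ∀ i j : J, i ≠ j → ∀ᵐ z : J → ℝ, z i ≠ z j := by
    intro i j hij
    let p : (J → ℝ) →ₗ[ℝ] ℝ := LinearMap.proj (R := ℝ) (φ := fun _ : J => ℝ) i
      - LinearMap.proj (R := ℝ) (φ := fun _ : J => ℝ) j
    have h0 := Measure.addHaar_submodule (volume : Measure (J → ℝ)) (LinearMap.ker p) (by
      intro htop
      have : (Pi.single i 1 : J → ℝ) ∈ LinearMap.ker p := htop ▸ Submodule.mem_top
      simp [p, hij.symm] at this)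
    rw [ae_iff]
    refine measure_mono_null ?_ h0
    intro z hz
    simp only [Set.mem_ofPred_eq, not_not] at hz
    simp [p, hz]
  have h2 : ∀ᵐ z : J → ℝ, ∀ i j : J, i ≠ j → z i ≠ z j := by
    rw [ae_all_iff]; intro i; rw [ae_all_iff]; intro j
    by_cases hij : i = j
    · exact Filter.Eventually.of_forall fun _ h => (h hij).elim
    · exact (h i j hij).mono fun _ hz _ => hz
  filter_upwards [h2] with z hz i j hij
  by_contra hne
  exact hz i j hne hij

lemma continuousOn_colWeight {J : Type*} [Fintype J] [DecidableEq J] {β : ℝ} (hβ : 0 < β)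
    {E : ℝ → ℝ} {S : Set ℝ} (hE : ContinuousOn E S) (c : J → ℤˣ) :
    ContinuousOn (colWeight β E c) (Set.univ.pi (fun _ : J => S)) := by
  unfold colWeight
  refine ContinuousOn.mul ?_ (Continuous.continuousOn ?_)
  · refine continuousOn_finsetProd _ fun j _ => ?_
    exact hE.comp (continuous_apply j).continuousOn fun z hz => hz j trivial
  · refine continuous_finsetProd _ fun i _ => continuous_finsetProd _ fun j _ => ?_
    split_ifs
    · exact (((continuous_apply i).sub (continuous_apply j)).abs).rpow_const
        fun _ => Or.inr (by positivity)
    · exact continuous_const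

lemma continuousOn_linStat {J : Type*} [Fintype J] {φ : ℝ → ℝ} {S : Set ℝ}
    (hφ : ContinuousOn φ S) (c : J → ℤˣ) :
    ContinuousOn (fun z => linStat φ z c) (Set.univ.pi (fun _ : J => S)) := by
  unfold linStat
  refine continuousOn_finsetSum _ fun j _ => ContinuousOn.mul continuousOn_const ?_
  exact hφ.comp (continuous_apply j).continuousOn fun z hz => hz j trivial

/-- Second moment of the difference of the linear statistics of two independent replicas. All neutral
colourings are permutations of `baseCol n`, so both integrals may be averaged over the colourings,
and then `sum_sq_le_of_injective` applies at almost every `z`. -/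
lemma replica_bound {n : ℕ} (hn : 0 < n) {β K L : ℝ} (hβ : 0 < β) (hK : 0 < K) (hLpos : 0 < L)
    {E φ : ℝ → ℝ} {S : Set ℝ} (hS : IsCompact S) (hE : ContinuousOn E S) (hE0 : ∀ x, 0 < E x)
    (hφc : ContinuousOn φ S) (hL : ∀ x ∈ S, ∀ y ∈ S, x - y ≤ L)
    (hφ : ∀ x ∈ S, ∀ y ∈ S, |φ x - φ y| ≤ K * |x - y|) :
    ∫ z in Set.univ.pi (fun _ : Fin n ⊕ Fin n => S),
        colWeight β E (baseCol n) z * linStat φ z (baseCol n) ^ 2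
      ≤ 4 * (K * L / (β / 2)) ^ 2 * Real.exp (β / 2)
        * ∫ z in Set.univ.pi (fun _ : Fin n ⊕ Fin n => S), colWeight β E (baseCol n) z := by
  set J := Fin n ⊕ Fin n
  set Q : Set (J → ℝ) := Set.univ.pi (fun _ : J => S)
  set C := 4 * (K * L / (β / 2)) ^ 2 * Real.exp (β / 2)
  have hQ : IsCompact Q := isCompact_univ_pi fun _ => hS
  have hi0 : ∀ c : J → ℤˣ, IntegrableOn (colWeight β E c) Q := fun c =>
    (continuousOn_colWeight hβ hE c).integrableOn_compact hQ
  have hi2 : ∀ c : J → ℤˣ, IntegrableOn (fun z => colWeight β E c z * linStat φ z c ^ 2) Q :=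
    fun c => ((continuousOn_colWeight hβ hE c).mul
      ((continuousOn_linStat hφc c).pow 2)).integrableOn_compact hQ
  have hs0 : ∀ c ∈ neutral J, ∫ z in Q, colWeight β E c z
      = ∫ z in Q, colWeight β E (baseCol n) z := by
    intro c hc
    obtain ⟨π, rfl⟩ := exists_perm_of_neutral hc
    rw [← setIntegral_comp_perm S _ π]
    simp only [colWeight_comp]
    rfl
  have hs2 : ∀ c ∈ neutral J, ∫ z in Q, colWeight β E c z * linStat φ z c ^ 2
      = ∫ z in Q, colWeight β E (baseCol n) z * linStat φ z (baseCol n) ^ 2 := by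
    intro c hc
    obtain ⟨π, rfl⟩ := exists_perm_of_neutral hc
    rw [← setIntegral_comp_perm S _ π]
    simp only [colWeight_comp, linStat_comp]
    rfl
  have hmain : ∫ z in Q, ∑ c ∈ neutral J, colWeight β E c z * linStat φ z c ^ 2
      ≤ ∫ z in Q, C * ∑ c ∈ neutral J, colWeight β E c z := by
    refine setIntegral_mono_on_ae (integrable_finsetSum _ fun c _ => hi2 c)
      ((integrable_finsetSum _ fun c _ => hi0 c).const_mul C)
      (MeasurableSet.univ_pi fun _ => hS.measurableSet) ?_
    filter_upwards [ae_injective (J := J)] with z hz hzQ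
    have hp := sum_sq_le_of_injective (J := J) (m := 2 * n - 2) (κ := β / 2)
      (by simp [J]; omega) (by positivity) hK hLpos hz
      (fun i j => hL _ (hzQ i trivial) _ (hzQ j trivial))
      (fun i j => hφ _ (hzQ i trivial) _ (hzQ j trivial))
    simp only [colWeight_eq_exp β E _ hz]
    have hA : 0 ≤ (∏ j, E (z j)) * Real.exp (β / 4 * ∑ i, ∑ j, Real.log |z i - z j|) :=
      mul_nonneg (Finset.prod_nonneg fun j _ => (hE0 _).le) (Real.exp_nonneg _)
    have := mul_le_mul_of_nonneg_left hp hA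
    rw [Finset.mul_sum] at this
    rw [← Finset.mul_sum]
    simp only [mul_assoc] at this ⊢
    refine this.trans (le_of_eq ?_)
    simp only [C]; ring
  rw [integral_finsetSum _ fun c _ => hi2 c, integral_const_mul,
    integral_finsetSum _ fun c _ => hi0 c, Finset.sum_congr rfl hs2, Finset.sum_congr rfl hs0,
    Finset.sum_const, Finset.sum_const, nsmul_eq_mul, nsmul_eq_mul] at hmain
  have hcard : (0 : ℝ) < (neutral J).card := by
    exact_mod_cast Finset.card_pos.2 ⟨_, baseCol_mem n⟩
  refine le_of_mul_le_mul_left ?_ hcard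
  linarith

/-! ### From two replicas to the variance -/

/-- The weight of a single replica, with a general one-body factor `E`. -/
noncomputable def repWeight {n : ℕ} (β : ℝ) (E : ℝ → ℝ) (Λ : Fin n → ℝ) : ℝ :=
  (∏ i, E (Λ i)) * ∏ i, ∏ j ∈ Finset.Ioi i, |Λ i - Λ j| ^ β

lemma prod_offDiag_eq {n : ℕ} (β : ℝ) (hβ : 0 < β) (Λ : Fin n → ℝ) :
    ∏ i, ∏ j, (if i ≠ j then |Λ i - Λ j| ^ (β / 2) else 1)
      = ∏ i, ∏ j ∈ Finset.Ioi i, |Λ i - Λ j| ^ β := by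
  have h := Finset.prod_prod_Ioi_mul_eq_prod_prod_off_diag
    (fun i j : Fin n => |Λ i - Λ j| ^ (β / 2))
  have h1 : ∀ i j : Fin n, |Λ j - Λ i| ^ (β / 2) * |Λ i - Λ j| ^ (β / 2) = |Λ i - Λ j| ^ β := by
    intro i j
    rw [abs_sub_comm, ← Real.rpow_add_of_nonneg (abs_nonneg _) (by positivity) (by positivity),
      add_halves]
  simp only [h1] at h
  rw [h]
  refine Finset.prod_congr rfl fun i _ => ?_
  rw [← Finset.prod_filter]
  refine Finset.prod_congr ?_ fun j _ => by rw [abs_sub_comm]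
  ext j; simp [eq_comm]

lemma colWeight_baseCol {n : ℕ} {β : ℝ} (hβ : 0 < β) (E : ℝ → ℝ) (z : Fin n ⊕ Fin n → ℝ) :
    colWeight β E (baseCol n) z
      = repWeight β E (fun i => z (Sum.inl i)) * repWeight β E (fun i => z (Sum.inr i)) := by
  have hne : (1 : ℤˣ) ≠ -1 := by decide
  unfold colWeight repWeight
  rw [Fintype.prod_sum_type, Fintype.prod_sum_type]
  simp only [Fintype.prod_sum_type, baseCol, Sum.elim_inl, Sum.elim_inr, hne, hne.symm, and_false,
    if_false, Finset.prod_const_one, mul_one, one_mul, and_true, ne_eq, Sum.inl.injEq,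
    Sum.inr.injEq]
  have h1 := prod_offDiag_eq β hβ (fun i => z (Sum.inl i))
  have h2 := prod_offDiag_eq β hβ (fun i => z (Sum.inr i))
  simp only [ne_eq] at h1 h2
  rw [h1, h2]
  ring

lemma linStat_baseCol {n : ℕ} (φ : ℝ → ℝ) (z : Fin n ⊕ Fin n → ℝ) :
    linStat φ z (baseCol n) = (∑ i, φ (z (Sum.inl i))) - ∑ i, φ (z (Sum.inr i)) := by
  simp [linStat, baseCol, Fintype.sum_sum_type, sub_eq_add_neg]

lemma setIntegral_sum_mul {n : ℕ} (S : Set ℝ) (f g : (Fin n → ℝ) → ℝ) :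
    ∫ z in Set.univ.pi (fun _ : Fin n ⊕ Fin n => S),
        f (fun i => z (Sum.inl i)) * g (fun i => z (Sum.inr i))
      = (∫ Λ in Set.univ.pi (fun _ : Fin n => S), f Λ)
        * ∫ Λ in Set.univ.pi (fun _ : Fin n => S), g Λ := by
  rw [← setIntegral_prod_mul]
  have hmp := volume_measurePreserving_sumPiEquivProdPi (fun _ : Fin n ⊕ Fin n => ℝ)
  have h := hmp.setIntegral_preimage_emb (MeasurableEquiv.measurableEmbedding _)
    (fun p => f p.1 * g p.2)
    (Set.univ.pi (fun _ : Fin n => S) ×ˢ Set.univ.pi (fun _ : Fin n => S))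
  refine Eq.trans ?_ h
  have hset : Set.univ.pi (fun _ : Fin n ⊕ Fin n => S)
      = (MeasurableEquiv.sumPiEquivProdPi (fun _ : Fin n ⊕ Fin n => ℝ)) ⁻¹'
        (Set.univ.pi (fun _ : Fin n => S) ×ˢ Set.univ.pi (fun _ : Fin n => S)) := by
    ext z
    simp [MeasurableEquiv.coe_sumPiEquivProdPi, Equiv.sumPiEquivProdPi, Set.mem_pi]
  rw [hset]
  rfl

lemma continuousOn_repWeight {n : ℕ} {β : ℝ} (hβ : 0 < β) {E : ℝ → ℝ} {S : Set ℝ}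
    (hE : ContinuousOn E S) :
    ContinuousOn (repWeight (n := n) β E) (Set.univ.pi (fun _ : Fin n => S)) := by
  unfold repWeight
  refine ContinuousOn.mul ?_ (Continuous.continuousOn ?_)
  · refine continuousOn_finsetProd _ fun j _ => ?_
    exact hE.comp (continuous_apply j).continuousOn fun z hz => hz j trivial
  · refine continuous_finsetProd _ fun i _ => continuous_finsetProd _ fun j _ => ?_
    exact (((continuous_apply i).sub (continuous_apply j)).abs).rpow_const fun _ => Or.inr hβ.le

lemma integral_sub_add {α : Type*} [MeasurableSpace α] {μ : Measure α} {f g h : α → ℝ}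
    (hf : Integrable f μ) (hg : Integrable g μ) (hh : Integrable h μ) (a b : ℝ) :
    ∫ x, (f x - a * g x + b * h x) ∂μ
      = (∫ x, f x ∂μ) - a * (∫ x, g x ∂μ) + b * ∫ x, h x ∂μ := by
  have h1 : Integrable (fun x => f x - a * g x) μ := hf.sub (hg.const_mul a)
  rw [integral_add h1 (hh.const_mul b), integral_sub hf (hg.const_mul a), integral_const_mul,
    integral_const_mul]

/-- A bound on the variance of `∑ φ (Λ i)` that does not depend on `n` or on the one-body factor `E`:
twice the variance is the second moment of the difference of two independent copies. For `Z = 0` the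
left side is `0` because `0⁻¹ = 0`. -/
lemma variance_le {n : ℕ} (hn : 0 < n) {β K L : ℝ} (hβ : 0 < β) (hK : 0 < K) (hLpos : 0 < L)
    {E φ : ℝ → ℝ} {S : Set ℝ} (hS : IsCompact S) (hE : ContinuousOn E S) (hE0 : ∀ x, 0 < E x)
    (hφc : ContinuousOn φ S) (hL : ∀ x ∈ S, ∀ y ∈ S, x - y ≤ L)
    (hφ : ∀ x ∈ S, ∀ y ∈ S, |φ x - φ y| ≤ K * |x - y|) {Q : Set (Fin n → ℝ)}
    (hQdef : Q = Set.univ.pi (fun _ : Fin n => S)) {Z : ℝ}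
    (hZ : Z = ∫ Λ in Q, repWeight β E Λ) :
    Z⁻¹ * ∫ Λ in Q, repWeight β E Λ
        * ((∑ i, φ (Λ i)) - Z⁻¹ * ∫ Λ in Q, repWeight β E Λ * ∑ i, φ (Λ i)) ^ 2
      ≤ 2 * (K * L / (β / 2)) ^ 2 * Real.exp (β / 2) := by
  subst hQdef
  set Q : Set (Fin n → ℝ) := Set.univ.pi (fun _ : Fin n => S) with hQd
  have hQ : IsCompact Q := isCompact_univ_pi fun _ => hS
  set w : (Fin n → ℝ) → ℝ := repWeight β E with hw
  set F : (Fin n → ℝ) → ℝ := fun Λ => ∑ i, φ (Λ i) with hF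
  have hwc : ContinuousOn w Q := continuousOn_repWeight hβ hE
  have hFc : ContinuousOn F Q := continuousOn_finsetSum _ fun j _ =>
    hφc.comp (continuous_apply j).continuousOn fun z hz => hz j trivial
  have hw1 : ContinuousOn (fun Λ => w Λ * F Λ) Q := hwc.mul hFc
  have hw2 : ContinuousOn (fun Λ => w Λ * F Λ ^ 2) Q := hwc.mul (hFc.pow 2)
  have hb := replica_bound hn hβ hK hLpos hS hE hE0 hφc hL hφ
  set R : Set (Fin n ⊕ Fin n → ℝ) := Set.univ.pi (fun _ : Fin n ⊕ Fin n => S) with hRd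
  have hR : IsCompact R := isCompact_univ_pi fun _ => hS
  have hint : ∀ f g : (Fin n → ℝ) → ℝ, ContinuousOn f Q → ContinuousOn g Q →
      IntegrableOn (fun z : Fin n ⊕ Fin n → ℝ =>
        f (fun i => z (Sum.inl i)) * g (fun i => z (Sum.inr i))) R := by
    intro f g hf hg
    refine ContinuousOn.integrableOn_compact hR (ContinuousOn.mul ?_ ?_)
    · refine hf.comp (Continuous.continuousOn (by fun_prop)) fun z hz i _ => hz _ trivial
    · refine hg.comp (Continuous.continuousOn (by fun_prop)) fun z hz i _ => hz _ trivial
  set a1 := ∫ Λ in Q, w Λ * F Λ with ha1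
  set a2 := ∫ Λ in Q, w Λ * F Λ ^ 2 with ha2
  have e0 : ∫ z in R, colWeight β E (baseCol n) z = Z * Z := by
    rw [hZ, ← setIntegral_sum_mul]
    simp only [colWeight_baseCol hβ]
    rfl
  have e2 : ∫ z in R, colWeight β E (baseCol n) z * linStat φ z (baseCol n) ^ 2
      = a2 * Z - 2 * (a1 * a1) + Z * a2 := by
    have hlin := integral_sub_add (hint _ _ hw2 hwc) (hint _ _ hw1 hw1) (hint _ _ hwc hw2) 2 1
    have p1 := setIntegral_sum_mul S (fun Λ => w Λ * F Λ ^ 2) w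
    have p2 := setIntegral_sum_mul S (fun Λ => w Λ * F Λ) (fun Λ => w Λ * F Λ)
    have p3 := setIntegral_sum_mul S w (fun Λ => w Λ * F Λ ^ 2)
    rw [hZ]
    refine Eq.trans ?_ (hlin.trans ?_)
    rotate_left
    · rw [one_mul]
      exact congrArg₂ (· + ·) (congrArg₂ (· - ·) p1 (congrArg (2 * ·) p2)) p3
    refine integral_congr_ae (Filter.Eventually.of_forall fun z => ?_)
    simp only [colWeight_baseCol hβ, linStat_baseCol, hF, hw]
    ring
  rw [e0, e2] at hb
  have hC : 0 ≤ 2 * (K * L / (β / 2)) ^ 2 * Real.exp (β / 2) := by positivity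
  rcases eq_or_ne Z 0 with hZ0 | hZ0
  · rw [hZ0]; simpa using hC
  have e3 : ∫ Λ in Q, w Λ * (F Λ - Z⁻¹ * a1) ^ 2
      = a2 - 2 * (Z⁻¹ * a1) * a1 + (Z⁻¹ * a1) ^ 2 * Z := by
    have i0 : IntegrableOn w Q := hwc.integrableOn_compact hQ
    have i1 := hw1.integrableOn_compact (μ := volume) hQ
    have i2 := hw2.integrableOn_compact (μ := volume) hQ
    have : (fun Λ => w Λ * (F Λ - Z⁻¹ * a1) ^ 2) = fun Λ =>
        w Λ * F Λ ^ 2 - (2 * (Z⁻¹ * a1)) * (w Λ * F Λ) + (Z⁻¹ * a1) ^ 2 * w Λ := by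
      funext Λ; ring
    rw [this, integral_sub_add i2 i1 i0, ← hZ]
  have e4 : Z⁻¹ * (a2 - 2 * (Z⁻¹ * a1) * a1 + (Z⁻¹ * a1) ^ 2 * Z)
      = (a2 * Z - 2 * (a1 * a1) + Z * a2) / (2 * (Z * Z)) := by
    field_simp; ring
  have hZZ : 0 < 2 * (Z * Z) := by
    have := mul_self_pos.2 hZ0; positivity
  refine le_trans (le_of_eq (congrArg (Z⁻¹ * ·) e3)) ?_
  rw [e4, div_le_iff₀ hZZ]
  linarith

/-! ### Application to the modified ensemble -/

lemma isCompact_infDist_seg (r : ℝ) : IsCompact {z : ℂ | infDist z seg ≤ r} := by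
  refine Metric.isCompact_of_isClosed_isBounded
    (isClosed_le (continuous_infDist_pt _) continuous_const) ?_
  refine (Metric.isBounded_closedBall (x := (0 : ℂ)) (r := r + 3)).subset fun z hz => ?_
  have hne : seg.Nonempty := ⟨((0 : ℝ) : ℂ), 0, by norm_num, rfl⟩
  obtain ⟨y, hy, hzy⟩ := (infDist_lt_iff hne).1 (lt_of_le_of_lt hz (lt_add_one r))
  obtain ⟨x, hx, rfl⟩ := hy
  have h1 : dist ((x : ℝ) : ℂ) 0 ≤ 2 := by
    rw [dist_zero_right, Complex.norm_real, Real.norm_eq_abs, abs_le]; exact hx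
  rw [mem_closedBall]
  linarith [dist_triangle z x 0]

lemma norm_le_iSup_of_isCompact {A : Set ℂ} (hA : IsCompact A) {φ : ℂ → ℂ}
    (hφ : ContinuousOn φ A) {z : ℂ} (hz : z ∈ A) : ‖φ z‖ ≤ ⨆ z ∈ A, ‖φ z‖ := by
  obtain ⟨M, hM⟩ := hA.exists_bound_of_continuousOn hφ
  have hbdd : BddAbove (Set.range fun z => ⨆ (_ : z ∈ A), ‖φ z‖) := by
    refine ⟨max M 0, ?_⟩
    rintro _ ⟨y, rfl⟩
    exact Real.iSup_le (fun hy => (hM y hy).trans (le_max_left _ _)) (le_max_right _ _)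
  refine le_trans ?_ (le_ciSup hbdd z)
  simp [hz]

lemma exists_lipschitz {D : Set ℂ} (hD : IsOpen D) {φ : ℂ → ℂ} (hφ : DifferentiableOn ℂ φ D)
    {a b : ℝ} (hI : ∀ x : ℝ, x ∈ Set.Icc a b → (x : ℂ) ∈ D) :
    ∃ K : ℝ, 0 < K ∧ ∀ x ∈ Set.Icc a b, ∀ y ∈ Set.Icc a b,
      |(φ x).re - (φ y).re| ≤ K * |x - y| := by
  have hc : ContinuousOn (fun x : ℝ => deriv φ (x : ℂ)) (Set.Icc a b) :=
    (hφ.deriv hD).continuousOn.comp Complex.continuous_ofReal.continuousOn hI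
  obtain ⟨M, hM⟩ := isCompact_Icc.exists_bound_of_continuousOn hc
  refine ⟨max M 1, lt_max_of_lt_right one_pos, fun x hx y hy => ?_⟩
  have hder : ∀ t ∈ Set.Icc a b, HasDerivWithinAt (fun t : ℝ => φ (t : ℂ)) (deriv φ (t : ℂ))
      (Set.Icc a b) t := fun t ht =>
    ((hφ.differentiableAt (hD.mem_nhds (hI t ht))).hasDerivAt.comp_ofReal).hasDerivWithinAt
  have h := (convex_Icc a b).norm_image_sub_le_of_norm_hasDerivWithin_le hder
    (fun t ht => (hM t ht).trans (le_max_left M 1)) hy hx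
  rw [← Complex.sub_re]
  exact (Complex.abs_re_le_norm _).trans h

/-- The variance in the modified ensemble is bounded uniformly in the number of points and in the
perturbation `h`. -/
lemma modVar_le {β : ℝ} (hβ : 0 < β) {V : ℝ → ℝ} {D : Set ℂ} {ρ : ℝ → ℝ} {P : ℂ → ℂ}
    (hC : EquilC13 V D ρ P) {ε : ℝ} (hε : 0 < ε)
    (hI : ∀ x : ℝ, x ∈ Set.Icc (-2 - ε) (2 + ε) → (x : ℂ) ∈ D)
    {φ : ℂ → ℂ} (hφ : DifferentiableOn ℂ φ D) :
    ∃ C : ℝ, 0 < C ∧ ∀ (k : ℕ) (h : ℂ → ℂ), DifferentiableOn ℂ h D →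
      modVar β V h ε (k + 2) (fun x => (φ x).re) ≤ C := by
  obtain ⟨K, hK, hlip⟩ := exists_lipschitz hC.D_open hφ hI
  refine ⟨2 * (K * (4 + 2 * ε) / (β / 2)) ^ 2 * Real.exp (β / 2), by positivity, ?_⟩
  intro k h hh
  have hcont : ∀ f : ℂ → ℂ, DifferentiableOn ℂ f D →
      ContinuousOn (fun x : ℝ => (f x).re) (Set.Icc (-2 - ε) (2 + ε)) := fun f hf =>
    Complex.continuous_re.comp_continuousOn
      (hf.continuousOn.comp Complex.continuous_ofReal.continuousOn hI)
  have hV : ContinuousOn V (Set.Icc (-2 - ε) (2 + ε)) := by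
    obtain ⟨Vc, hVc, hVeq⟩ := hC.V_anal
    exact (hcont Vc hVc).congr fun x hx => by simp [hVeq x (hI x hx)]
  refine variance_le (n := k + 2) (by omega) (β := β) (S := Set.Icc (-2 - ε) (2 + ε))
    (E := fun x => Real.exp (-(((k + 2 : ℕ) : ℝ) * β * (V x + (h x).re / ((k + 2 : ℕ) : ℝ))) / 2))
    hβ hK (by positivity) isCompact_Icc ?_ (fun _ => Real.exp_pos _) (hcont φ hφ)
    (fun x hx y hy => by linarith [hx.2, hy.1]) hlip rfl rfl
  refine ContinuousOn.rexp ?_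
  exact ((continuousOn_const.mul (hV.add ((hcont h hh).div_const _))).neg).div_const _

lemma modVar_eq_zero {β : ℝ} {V : ℝ → ℝ} {h : ℂ → ℂ} {ε : ℝ} {n : ℕ} {f : ℝ → ℝ}
    (hf : ∀ x ∈ Set.Icc (-2 - ε) (2 + ε), f x = 0) : modVar β V h ε n f = 0 := by
  have hsum : ∀ Λ ∈ Set.univ.pi (fun _ : Fin n => Set.Icc (-2 - ε) (2 + ε)),
      ∑ i, f (Λ i) = 0 := fun Λ hΛ => Finset.sum_eq_zero fun i _ => hf _ (hΛ i trivial)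
  have hmean : modMean β V h ε n f = 0 := by
    unfold modMean
    rw [setIntegral_eq_zero_of_forall_eq_zero (fun Λ hΛ => by rw [hsum Λ hΛ, mul_zero]), mul_zero]
  unfold modVar
  rw [hmean, setIntegral_eq_zero_of_forall_eq_zero (fun Λ hΛ => by rw [hsum Λ hΛ]; simp), mul_zero]

end BG

/-- Johansson-type variance lemma.  If the expectation bound holds for all
real-analytic perturbations `h`, then the variance of the linear statistic of `φ` is
bounded by `C* w_n² sup|φ|²`, with `C*` independent of `n`. -/
theorem johansson_variance_lemma
    (β : ℝ) (hβ : 0 < β) (V : ℝ → ℝ)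
    (D : Set ℂ) (ρ : ℝ → ℝ) (P : ℂ → ℂ) (hC : EquilC13 V D ρ P)
    (ε : ℝ) (hε : 0 < ε)
    (hI : ∀ x : ℝ, x ∈ Set.Icc (-2 - ε) (2 + ε) → (x : ℂ) ∈ D)
    (d : ℝ) (hd : 0 < d)
    (hsub : {z : ℂ | infDist z seg ≤ 2 * d} ⊆ D)
    (φ : ℂ → ℂ) (hφ : DifferentiableOn ℂ φ D) (hφR : ∀ x : ℝ, (φ x).im = 0) :
    ∃ Cstar : ℝ, 0 < Cstar ∧ ∀ (k : ℕ) (w : ℝ), 1 ≤ w →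
      (∀ h : ℂ → ℂ, DifferentiableOn ℂ h D → (∀ x : ℝ, (h x).im = 0) →
        (k + 2 : ℝ) *
            |∫ l in Set.Icc (-2 - ε) (2 + ε), (φ l).re * (modP1 β V h ε k l - ρ l)|
          ≤ w * ((⨆ z ∈ {z : ℂ | infDist z seg = 2 * d}, ‖φ z‖)
              + ⨆ l ∈ Set.Icc (-2 - ε) (2 + ε), ‖deriv h (l : ℂ)‖)) →
      ∀ h : ℂ → ℂ, DifferentiableOn ℂ h D → (∀ x : ℝ, (h x).im = 0) →
        modVar β V h ε (k + 2) (fun x => (φ x).re)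
          ≤ Cstar * w ^ 2 * (⨆ z ∈ {z : ℂ | infDist z seg ≤ 2 * d}, ‖φ z‖) ^ 2 := by
  set A : Set ℂ := {z : ℂ | infDist z seg ≤ 2 * d} with hA
  set s : ℝ := ⨆ z ∈ A, ‖φ z‖ with hs
  have hle : ∀ z ∈ A, ‖φ z‖ ≤ s := fun z hz =>
    BG.norm_le_iSup_of_isCompact (BG.isCompact_infDist_seg _) (hφ.continuousOn.mono hsub) hz
  have hs0 : 0 ≤ s := Real.iSup_nonneg fun z => Real.iSup_nonneg fun _ => norm_nonneg _
  rcases hs0.eq_or_lt with hs0 | hspos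
    -- If the supremum is zero, `φ` vanishes near `0`, hence on `[-2-ε, 2+ε]` by the identity theorem.
  · have hzero : ∀ x ∈ Set.Icc (-2 - ε) (2 + ε), (φ x).re = 0 := by
      have hU : IsPreconnected (Complex.ofReal '' Set.Icc (-2 - ε) (2 + ε)) :=
        isPreconnected_Icc.image _ Complex.continuous_ofReal.continuousOn
      have h0 : ((0 : ℝ) : ℂ) ∈ seg := ⟨0, by norm_num, rfl⟩
      have hev : φ =ᶠ[nhds ((0 : ℝ) : ℂ)] 0 := by
        filter_upwards [Metric.ball_mem_nhds ((0 : ℝ) : ℂ) (by positivity : 0 < 2 * d)] with z hz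
        have hz' : z ∈ A := (infDist_le_dist_of_mem h0).trans (le_of_lt hz)
        have := hle z hz'
        rw [← hs0] at this
        exact norm_le_zero_iff.1 this
      have hEq := AnalyticOnNhd.eqOn_zero_of_preconnected_of_eventuallyEq_zero
        ((hφ.analyticOnNhd hC.D_open).mono (by rintro _ ⟨x, hx, rfl⟩; exact hI x hx)) hU
        ⟨0, ⟨by linarith, by linarith⟩, rfl⟩ hev
      intro x hx
      have := hEq ⟨x, hx, rfl⟩
      rw [this]; rfl
    refine ⟨1, one_pos, fun k w _ _ h _ _ => ?_⟩
    rw [BG.modVar_eq_zero hzero]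
    positivity
  · obtain ⟨C, hCpos, hbound⟩ := BG.modVar_le hβ hC hε hI hφ
    refine ⟨C / s ^ 2, by positivity, fun k w hw _ h hh _ => (hbound k h hh).trans ?_⟩
    have : C / s ^ 2 * w ^ 2 * s ^ 2 = C * w ^ 2 := by field_simp
    rw [this]
    nlinarith [mul_le_mul hw hw zero_le_one (by linarith : (0 : ℝ) ≤ w)]
end

section
/- (First loop equation) Let β>0, n≥2, and let V be a polynomial of even degree with positive leading coefficient. Let p_1^{(n)} and p_2^{(n)} be the first and second marginal densities of the β-ensemble with potential V. Then for every z ∈ ℂ with Im z ≠ 0: ∫_ℝ V'(λ) p_1^{(n)}(λ)/(z−λ) dλ = (2/(βn)) ∫_ℝ p_1^{(n)}(λ)/(z−λ)² dλ + ((n−1)/n) ∫_ℝ∫_ℝ p_2^{(n)}(λ,μ)/((z−λ)(z−μ)) dλ dμ. -/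
/-!
The loop equation expresses that `∂ (W / (z - Λ 0))` integrates to zero, the derivative being in the
first particle and `W` the unnormalized density. The derivative of `W` contributes `-(n β / 2) V'`
and the interaction terms `β / (Λ 0 - Λ j)`. Exchanging particles `0` and `j` and averaging replaces
`1 / ((Λ 0 - Λ j) (z - Λ 0))` by `1 / (2 (z - Λ 0) (z - Λ j))`, and all `n - 1` values of `j` give the
same integral by symmetry.

For `β < 1` the density is not differentiable on the diagonals, so `|x| ^ β` is first replaced by
`(x ^ 2 + ε) ^ (β / 2)` (`regWeight`). Then `1 / x` becomes the bounded kernel `x / (x ^ 2 + ε)`, the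
integration by parts (`integration_by_parts`) involves smooth functions only, and symmetrization
(`symmetrization`) yields the factor `x ^ 2 / (x ^ 2 + ε) ≤ 1`. Dominated convergence as `ε → 0`
(`unregularized_loop_equation`) rests on an integrable majorant that is a product of one-particle
functions (`exists_integrable_dominating`). Fubini's theorem then turns the integrals over all
particles into integrals against the marginals.
-/

open MeasureTheory

/-- The partition function `Q_{n,β}`. -/
noncomputable def partitionFn (β : ℝ) (V : ℝ → ℝ) (n : ℕ) : ℝ :=
  ∫ Λ : Fin n → ℝ, betaWeight β V n Λ

/-- First marginal density of the β-ensemble with `n = k+2` eigenvalues. -/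
noncomputable def p1full (β : ℝ) (V : ℝ → ℝ) (k : ℕ) (l : ℝ) : ℝ :=
  (partitionFn β V (k + 2))⁻¹ *
    ∫ y : Fin (k + 1) → ℝ, betaWeight β V (k + 2) (Fin.cons l y)

/-- Second marginal density of the β-ensemble with `n = k+2` eigenvalues. -/
noncomputable def p2full (β : ℝ) (V : ℝ → ℝ) (k : ℕ) (l m : ℝ) : ℝ :=
  (partitionFn β V (k + 2))⁻¹ *
    ∫ y : Fin k → ℝ, betaWeight β V (k + 2) (Fin.cons l (Fin.cons m y))


open Filter Topology

/-! ### Integrability against the one-particle weight -/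

lemma bddBelow_of_even_natDegree (P : Polynomial ℝ) (hdeg : Even P.natDegree)
    (hpos : 0 < P.natDegree) (hlead : 0 < P.leadingCoeff) : ∃ B, ∀ x, B ≤ P.eval x := by
  have h1 : Tendsto (fun x => P.eval x) atTop atTop :=
    P.tendsto_atTop_of_leadingCoeff_nonneg (Polynomial.natDegree_pos_iff_degree_pos.1 hpos) hlead.le
  have h2 : Tendsto (fun x => P.eval x) atBot atTop := by
    have h3 : Tendsto (fun x => (P.comp (-Polynomial.X)).eval x) atTop atTop := by
      apply Polynomial.tendsto_atTop_of_leadingCoeff_nonneg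
      · rw [← Polynomial.natDegree_pos_iff_degree_pos]
        simpa [Polynomial.natDegree_comp] using hpos
      · rw [Polynomial.comp_neg_X_leadingCoeff_eq, hdeg.neg_one_pow, one_mul]
        exact hlead.le
    have h4 := h3.comp tendsto_neg_atBot_atTop
    refine h4.congr fun x => ?_
    simp
  have h3 : Tendsto (fun x => P.eval x) (cocompact ℝ) atTop := by
    rw [cocompact_eq_atBot_atTop]
    exact h2.sup h1
  obtain ⟨x, hx⟩ := Continuous.exists_forall_le P.continuous h3
  exact ⟨_, hx⟩

/-- Since the degree is even and positive it is at least `2`, so the potential dominates a positive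
multiple of `x ^ 2`. -/
lemma quadratic_lower_bound (V : Polynomial ℝ) (hdeg : Even V.natDegree)
    (hpos : 0 < V.natDegree) (hlead : 0 < V.leadingCoeff) :
    ∃ a > 0, ∃ B, ∀ x, a * x ^ 2 + B ≤ V.eval x := by
  have h2 : 2 ≤ V.natDegree := by
    obtain ⟨m, hm⟩ := hdeg
    omega
  set a := V.leadingCoeff / 2 with ha
  set P := V - Polynomial.C a * Polynomial.X ^ 2 with hP
  have hc : 0 < P.coeff V.natDegree := by
    rw [hP, Polynomial.coeff_sub, Polynomial.coeff_C_mul, Polynomial.coeff_X_pow,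
      Polynomial.coeff_natDegree]
    split_ifs <;> linarith
  have hle : P.natDegree ≤ V.natDegree := by
    refine (Polynomial.natDegree_sub_le _ _).trans (max_le le_rfl ?_)
    exact (Polynomial.natDegree_C_mul_X_pow_le a 2).trans h2
  have hn : P.natDegree = V.natDegree := Polynomial.natDegree_eq_of_le_of_coeff_ne_zero hle hc.ne'
  obtain ⟨B, hB⟩ := bddBelow_of_even_natDegree P (hn ▸ hdeg) (hn ▸ hpos)
    (by rw [Polynomial.leadingCoeff, hn]; exact hc)
  refine ⟨a, by positivity, B, fun x => ?_⟩
  have := hB x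
  simp [hP] at this
  linarith

lemma integrable_polynomial_mul_gaussian (Q : Polynomial ℝ) {b : ℝ} (hb : 0 < b) :
    Integrable (fun x : ℝ => Q.eval x * Real.exp (-b * x ^ 2)) := by
  induction Q using Polynomial.induction_on' with
  | add p q hp hq =>
    simp only [Polynomial.eval_add, add_mul]
    exact hp.add hq
  | monomial n a =>
    have h := integrable_rpow_mul_exp_neg_mul_sq hb (s := (n : ℝ))
      (by have : (0 : ℝ) ≤ n := n.cast_nonneg
          linarith)
    simp only [Real.rpow_natCast] at h
    simpa [Polynomial.eval_monomial, mul_assoc] using h.const_mul a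

lemma integrable_polynomial_mul_exp_neg (V : Polynomial ℝ) (hdeg : Even V.natDegree)
    (hpos : 0 < V.natDegree) (hlead : 0 < V.leadingCoeff) {c : ℝ} (hc : 0 < c)
    (Q : Polynomial ℝ) :
    Integrable (fun x : ℝ => Q.eval x * Real.exp (-(c * V.eval x))) := by
  obtain ⟨a, ha, B, hB⟩ := quadratic_lower_bound V hdeg hpos hlead
  have h := (integrable_polynomial_mul_gaussian Q (mul_pos hc ha)).norm.const_mul
    (Real.exp (-(c * B)))
  refine h.mono' ?_ (ae_of_all _ fun x => ?_)
  · have h1 := Q.continuous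
    have h2 := V.continuous
    exact Continuous.aestronglyMeasurable (by fun_prop)
  · rw [norm_mul, norm_mul, Real.norm_eq_abs (Real.exp _), Real.norm_eq_abs (Real.exp _),
      abs_of_pos (Real.exp_pos _), abs_of_pos (Real.exp_pos _), mul_left_comm, ← Real.exp_add]
    gcongr
    nlinarith [mul_le_mul_of_nonneg_left (hB x) hc.le]

/-! ### The regularized weight -/

/-- The weight of `n` particles with confining factor `exp (-c V)` for each particle, and with each
interaction `|x - y| ^ β` replaced by `((x - y) ^ 2 + ε) ^ (β / 2)`. The constant `c` is independent
of `n` so that removing one particle gives a weight of the same form. -/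
noncomputable def regWeight (c β ε : ℝ) (V : ℝ → ℝ) (n : ℕ) (Λ : Fin n → ℝ) : ℝ :=
  (∏ i, Real.exp (-(c * V (Λ i)))) *
    ∏ i, ∏ j ∈ Finset.Ioi i, ((Λ i - Λ j) ^ 2 + ε) ^ (β / 2)

lemma regWeight_zero (β : ℝ) (V : ℝ → ℝ) (n : ℕ) (Λ : Fin n → ℝ) :
    regWeight (n * β / 2) β 0 V n Λ = betaWeight β V n Λ := by
  unfold regWeight betaWeight
  congr 1
  · refine Finset.prod_congr rfl fun i _ => ?_
    congr 1
    ring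
  · refine Finset.prod_congr rfl fun i _ => Finset.prod_congr rfl fun j _ => ?_
    rw [add_zero, ← sq_abs, ← Real.rpow_natCast, ← Real.rpow_mul (abs_nonneg _)]
    congr 1
    push_cast
    ring

lemma regWeight_nonneg {c β ε : ℝ} (hε : 0 ≤ ε) (V : ℝ → ℝ) (n : ℕ) (Λ : Fin n → ℝ) :
    0 ≤ regWeight c β ε V n Λ := by
  unfold regWeight
  positivity

lemma regWeight_cons (c β ε : ℝ) (V : ℝ → ℝ) (n : ℕ) (l : ℝ) (y : Fin n → ℝ) :
    regWeight c β ε V (n + 1) (Fin.cons l y) =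
      Real.exp (-(c * V l)) * (∏ j, ((l - y j) ^ 2 + ε) ^ (β / 2)) * regWeight c β ε V n y := by
  unfold regWeight
  simp only [Fin.prod_univ_succ, Fin.prod_Ioi_zero, Fin.prod_Ioi_succ, Fin.cons_zero, Fin.cons_succ]
  ring

lemma continuous_regWeight {c β ε : ℝ} (hβ : 0 < β) {V : ℝ → ℝ} (hV : Continuous V) (n : ℕ) :
    Continuous (regWeight c β ε V n) := by
  unfold regWeight
  refine Continuous.mul (by fun_prop) ?_
  refine continuous_finsetProd _ fun i _ => continuous_finsetProd _ fun j _ => ?_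
  exact Continuous.rpow_const (by fun_prop) fun _ => Or.inr (by positivity)

lemma continuous_regWeight_eps {c β : ℝ} (hβ : 0 < β) (V : ℝ → ℝ) (n : ℕ) (Λ : Fin n → ℝ) :
    Continuous (fun ε => regWeight c β ε V n Λ) := by
  unfold regWeight
  refine Continuous.mul (by fun_prop) ?_
  refine continuous_finsetProd _ fun i _ => continuous_finsetProd _ fun j _ => ?_
  exact Continuous.rpow_const (by fun_prop) fun _ => Or.inr (by positivity)

/-- Writing each pair factor as the product of two copies of its square
root turns the product over `i < j` into one over all `i ≠ j`, which is manifestly invariant. -/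
lemma regWeight_comp_perm {c β ε : ℝ} (hβ : 0 < β) (hε : 0 ≤ ε) (V : ℝ → ℝ) (n : ℕ) (Λ : Fin n → ℝ)
    (σ : Equiv.Perm (Fin n)) :
    regWeight c β ε V n (Λ ∘ σ) = regWeight c β ε V n Λ := by
  have key : ∀ Λ : Fin n → ℝ, (∏ i, ∏ j ∈ Finset.Ioi i, ((Λ i - Λ j) ^ 2 + ε) ^ (β / 2)) =
      ∏ i, ∏ j, if j = i then 1 else ((Λ i - Λ j) ^ 2 + ε) ^ (β / 4) := by
    intro Λ
    have h := Finset.prod_prod_Ioi_mul_eq_prod_prod_off_diag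
      (fun j i : Fin n => ((Λ i - Λ j) ^ 2 + ε) ^ (β / 4))
    have h1 : ∀ i : Fin n, (∏ j, if j = i then 1 else ((Λ i - Λ j) ^ 2 + ε) ^ (β / 4)) =
        ∏ j ∈ ({i}ᶜ : Finset (Fin n)), ((Λ i - Λ j) ^ 2 + ε) ^ (β / 4) := by
      intro i
      rw [Finset.prod_ite, Finset.prod_const_one, one_mul]
      refine Finset.prod_congr ?_ fun _ _ => rfl
      ext j
      simp
    simp only [h1]
    rw [← h]
    refine Finset.prod_congr rfl fun i _ => Finset.prod_congr rfl fun j _ => ?_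
    have h2 : (Λ j - Λ i) ^ 2 = (Λ i - Λ j) ^ 2 := by ring
    rw [h2, ← Real.rpow_add_of_nonneg (by positivity) (by positivity) (by positivity)]
    congr 1
    ring
  unfold regWeight
  rw [key, key]
  congr 1
  · exact Equiv.prod_comp σ (fun i => Real.exp (-(c * V (Λ i))))
  · rw [← Equiv.prod_comp σ
      (fun i => ∏ j, if j = i then 1 else ((Λ i - Λ j) ^ 2 + ε) ^ (β / 4))]
    refine Finset.prod_congr rfl fun i _ => ?_
    rw [← Equiv.prod_comp σ
      (fun j => if j = σ i then 1 else ((Λ (σ i) - Λ j) ^ 2 + ε) ^ (β / 4))]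
    simp

/-! ### Domination and integrability -/

lemma le_prod_of_one_le {n : ℕ} (f : Fin n → ℝ) (hf : ∀ i, 1 ≤ f i) (i : Fin n) :
    f i ≤ ∏ l, f l := by
  have h : f i = ∏ l, if l = i then f l else 1 := by simp
  rw [h]
  refine Finset.prod_le_prod (fun l _ => ?_) fun l _ => ?_ <;> split_ifs <;>
    linarith [hf l]

lemma mul_le_prod_of_one_le {n : ℕ} (f : Fin n → ℝ) (hf : ∀ i, 1 ≤ f i) {i j : Fin n}
    (hij : i ≠ j) : f i * f j ≤ ∏ l, f l := by
  have h : f i * f j = ∏ l, (if l = i then f l else 1) * (if l = j then f l else 1) := by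
    rw [Finset.prod_mul_distrib]
    simp
  rw [h]
  refine Finset.prod_le_prod (fun l _ => ?_) fun l _ => ?_
  · have := hf l
    split_ifs <;> positivity
  · have := hf l
    by_cases h1 : l = i
    · have h2 : l ≠ j := fun h => hij (h1 ▸ h)
      simp [h1, hij]
    · simp only [h1, if_false, one_mul]
      split_ifs <;> linarith

/-- Uniformly in `0 ≤ ε ≤ 1`, the interaction factor is at most a polynomial which is a product
over the particles. -/
lemma interaction_le {β : ℝ} (hβ : 0 < β) (n : ℕ) :
    ∃ K : ℝ, ∃ M : ℕ, 0 ≤ K ∧ ∀ ε : ℝ, 0 ≤ ε → ε ≤ 1 → ∀ Λ : Fin n → ℝ,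
      (∏ i, ∏ j ∈ Finset.Ioi i, ((Λ i - Λ j) ^ 2 + ε) ^ (β / 2)) ≤
        K * ∏ i, (1 + Λ i ^ 2) ^ M := by
  obtain ⟨m, hm⟩ := exists_nat_ge (β / 2)
  refine ⟨2 ^ (m * n * n), m * n * n, by positivity, fun ε h0 h1 Λ => ?_⟩
  have hone : ∀ i, (1 : ℝ) ≤ 1 + Λ i ^ 2 := fun i => by nlinarith [sq_nonneg (Λ i)]
  set S : ℝ := 2 * ∏ l, (1 + Λ l ^ 2) with hS
  have hS1 : 1 ≤ S := by
    have : (1 : ℝ) ≤ ∏ l, (1 + Λ l ^ 2) := by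
      calc (1 : ℝ) = ∏ l : Fin n, 1 := by simp
        _ ≤ _ := Finset.prod_le_prod (fun _ _ => by norm_num) fun l _ => hone l
    linarith
  have hpair : ∀ i, ∀ j ∈ Finset.Ioi i, ((Λ i - Λ j) ^ 2 + ε) ^ (β / 2) ≤ S ^ m := by
    intro i j hij
    have hne : i ≠ j := (Finset.mem_Ioi.1 hij).ne
    have h2 : (Λ i - Λ j) ^ 2 + ε ≤ S := by
      have := mul_le_prod_of_one_le (fun l => 1 + Λ l ^ 2) hone hne
      nlinarith [sq_nonneg (Λ i + Λ j), sq_nonneg (Λ i * Λ j)]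
    calc ((Λ i - Λ j) ^ 2 + ε) ^ (β / 2) ≤ S ^ (β / 2) :=
          Real.rpow_le_rpow (by positivity) h2 (by positivity)
      _ ≤ S ^ (m : ℝ) := Real.rpow_le_rpow_of_exponent_le hS1 hm
      _ = S ^ m := Real.rpow_natCast _ _
  calc (∏ i, ∏ j ∈ Finset.Ioi i, ((Λ i - Λ j) ^ 2 + ε) ^ (β / 2))
      ≤ ∏ i : Fin n, (S ^ m) ^ n := by
        refine Finset.prod_le_prod (fun i _ => by positivity) fun i _ => ?_
        calc (∏ j ∈ Finset.Ioi i, ((Λ i - Λ j) ^ 2 + ε) ^ (β / 2))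
            ≤ ∏ j ∈ Finset.Ioi i, S ^ m :=
              Finset.prod_le_prod (fun j _ => by positivity) (hpair i)
          _ = (S ^ m) ^ (Finset.Ioi i).card := by rw [Finset.prod_const]
          _ ≤ (S ^ m) ^ n := pow_le_pow_right₀ (one_le_pow₀ hS1)
              ((Finset.card_le_univ _).trans (by simp))
    _ = S ^ (m * n * n) := by
        rw [Finset.prod_const, Finset.card_univ, Fintype.card_fin, ← pow_mul, ← pow_mul,
          mul_assoc]
    _ = 2 ^ (m * n * n) * ∏ i, (1 + Λ i ^ 2) ^ (m * n * n) := by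
        rw [hS, mul_pow, Finset.prod_pow]

/-- A single integrable function dominates all regularized weights with `0 ≤ ε ≤ 1`, even after
multiplication by `1 + |U (Λ i)|` for a fixed polynomial `U`. -/
lemma exists_integrable_dominating (V : Polynomial ℝ) (hdeg : Even V.natDegree)
    (hpos : 0 < V.natDegree) (hlead : 0 < V.leadingCoeff) {c β : ℝ} (hc : 0 < c) (hβ : 0 < β)
    (U : Polynomial ℝ) (n : ℕ) :
    ∃ G : (Fin n → ℝ) → ℝ, Integrable G ∧ ∀ ε, 0 ≤ ε → ε ≤ 1 → ∀ Λ i,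
      (1 + |U.eval (Λ i)|) * regWeight c β ε (fun x => V.eval x) n Λ ≤ G Λ := by
  obtain ⟨K, M, hK, hb⟩ := interaction_le hβ n
  let Q : Polynomial ℝ := (2 + U ^ 2) * (1 + Polynomial.X ^ 2) ^ M
  have hQ : ∀ x, Q.eval x = (2 + U.eval x ^ 2) * (1 + x ^ 2) ^ M := fun x => by simp [Q]
  refine ⟨fun Λ => K * ∏ i, (Q.eval (Λ i) * Real.exp (-(c * V.eval (Λ i)))), ?_, ?_⟩
  · refine Integrable.const_mul ?_ K
    exact Integrable.fintype_prod (f := fun _ x => Q.eval x * Real.exp (-(c * V.eval x)))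
      fun _ => integrable_polynomial_mul_exp_neg V hdeg hpos hlead hc Q
  · intro ε h0 h1 Λ i
    have hU : 1 + |U.eval (Λ i)| ≤ ∏ l, (2 + U.eval (Λ l) ^ 2) := by
      refine le_trans ?_ (le_prod_of_one_le (fun l => 2 + U.eval (Λ l) ^ 2)
        (fun l => by nlinarith [sq_nonneg (U.eval (Λ l))]) i)
      rw [← sq_abs]
      nlinarith [sq_nonneg (|U.eval (Λ i)| - 1), abs_nonneg (U.eval (Λ i))]
    unfold regWeight
    simp only [hQ, Finset.prod_mul_distrib]
    calc (1 + |U.eval (Λ i)|) * ((∏ i, Real.exp (-(c * V.eval (Λ i)))) *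
          ∏ i, ∏ j ∈ Finset.Ioi i, ((Λ i - Λ j) ^ 2 + ε) ^ (β / 2))
        ≤ (∏ l, (2 + U.eval (Λ l) ^ 2)) * ((∏ i, Real.exp (-(c * V.eval (Λ i)))) *
          (K * ∏ i, (1 + Λ i ^ 2) ^ M)) := by
          gcongr
          exact hb ε h0 h1 Λ
      _ = _ := by ring

lemma inv_norm_le {z : ℂ} (hz : z.im ≠ 0) (x : ℝ) : ‖(z - x)⁻¹‖ ≤ |z.im|⁻¹ := by
  rw [norm_inv]
  have h : |z.im| ≤ ‖z - x‖ := by simpa using Complex.abs_im_le_norm (z - x)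
  exact inv_anti₀ (abs_pos.2 hz) h

lemma sub_ofReal_ne_zero {z : ℂ} (hz : z.im ≠ 0) (x : ℝ) : z - x ≠ 0 := by
  intro h
  apply hz
  simpa using congrArg Complex.im h

lemma continuous_resolvent {z : ℂ} (hz : z.im ≠ 0) : Continuous (fun x : ℝ => (z - x)⁻¹) :=
  Continuous.inv₀ (by fun_prop) (sub_ofReal_ne_zero hz)

lemma integrable_regWeight_mul (V : Polynomial ℝ) (hdeg : Even V.natDegree)
    (hpos : 0 < V.natDegree) (hlead : 0 < V.leadingCoeff) {c β ε : ℝ} (hc : 0 < c) (hβ : 0 < β)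
    (h0 : 0 ≤ ε) (h1 : ε ≤ 1) (U : Polynomial ℝ) (n : ℕ) {φ : (Fin n → ℝ) → ℂ}
    (hφ : Continuous φ) (i : Fin n) (C : ℝ) (hC : ∀ Λ, ‖φ Λ‖ ≤ C * (1 + |U.eval (Λ i)|)) :
    Integrable (fun Λ => (regWeight c β ε (fun x => V.eval x) n Λ : ℂ) * φ Λ) := by
  obtain ⟨G, hG, hd⟩ := exists_integrable_dominating V hdeg hpos hlead hc hβ U n
  have hC0 : 0 ≤ C := by
    have := (norm_nonneg _).trans (hC 0)
    by_contra h
    push Not at h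
    have h2 : 0 < 1 + |U.eval ((0 : Fin n → ℝ) i)| := by positivity
    nlinarith
  refine (hG.const_mul C).mono' ?_ (ae_of_all _ fun Λ => ?_)
  · have := continuous_regWeight (c := c) (ε := ε) hβ V.continuous n
    exact Continuous.aestronglyMeasurable (by fun_prop)
  · have hw := regWeight_nonneg (c := c) (β := β) h0 (fun x => V.eval x) n Λ
    rw [norm_mul, Complex.norm_real, Real.norm_of_nonneg hw]
    calc _ ≤ regWeight c β ε (fun x => V.eval x) n Λ * (C * (1 + |U.eval (Λ i)|)) := by
          gcongr
          exact hC Λ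
      _ = C * ((1 + |U.eval (Λ i)|) * regWeight c β ε (fun x => V.eval x) n Λ) := by ring
      _ ≤ _ := by
          gcongr
          exact hd ε h0 h1 Λ i

/-! ### Splitting off one coordinate, and permuting coordinates -/

section Fubini

variable {E : Type*} [NormedAddCommGroup E]

lemma integrable_cons {n : ℕ} {F : (Fin (n + 1) → ℝ) → E} (hF : Integrable F) :
    Integrable (fun p : ℝ × (Fin n → ℝ) => F (Fin.cons p.1 p.2)) (volume.prod volume) := by
  have h := (volume_preserving_piFinSuccAbove (fun _ : Fin (n + 1) => ℝ) 0).symm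
  have h2 := (h.integrable_comp_emb (MeasurableEquiv.measurableEmbedding _) (g := F)).2 hF
  refine h2.congr (ae_of_all _ fun p => ?_)
  simp [MeasurableEquiv.piFinSuccAbove, Fin.consEquiv]

variable [NormedSpace ℝ E]

lemma integral_eq_prod {n : ℕ} (F : (Fin (n + 1) → ℝ) → E) :
    ∫ Λ, F Λ = ∫ p : ℝ × (Fin n → ℝ), F (Fin.cons p.1 p.2) ∂(volume.prod volume) := by
  have h := (volume_preserving_piFinSuccAbove (fun _ : Fin (n + 1) => ℝ) 0).symm
  rw [← h.integral_comp' F]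
  refine integral_congr_ae (ae_of_all _ fun p => ?_)
  simp [MeasurableEquiv.piFinSuccAbove, Fin.consEquiv]

lemma integral_cons {n : ℕ} {F : (Fin (n + 1) → ℝ) → E} (hF : Integrable F) :
    ∫ Λ, F Λ = ∫ l : ℝ, ∫ y : Fin n → ℝ, F (Fin.cons l y) := by
  rw [integral_eq_prod, integral_prod _ (integrable_cons hF)]

lemma integral_cons_symm {n : ℕ} {F : (Fin (n + 1) → ℝ) → E} (hF : Integrable F) :
    ∫ Λ, F Λ = ∫ y : Fin n → ℝ, ∫ l : ℝ, F (Fin.cons l y) := by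
  rw [integral_eq_prod, integral_prod_symm _ (integrable_cons hF)]

lemma integral_cons_cons {n : ℕ} {F : (Fin (n + 2) → ℝ) → E} (hF : Integrable F) :
    ∫ Λ, F Λ = ∫ l : ℝ, ∫ m : ℝ, ∫ y : Fin n → ℝ, F (Fin.cons l (Fin.cons m y)) := by
  rw [integral_cons hF]
  refine integral_congr_ae ?_
  filter_upwards [(integrable_cons hF).prod_right_ae] with l hl
  exact integral_cons hl

lemma integral_comp_perm {n : ℕ} (σ : Equiv.Perm (Fin n)) (F : (Fin n → ℝ) → E) :
    ∫ Λ : Fin n → ℝ, F (Λ ∘ σ) = ∫ Λ, F Λ := by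
  have h := volume_measurePreserving_piCongrLeft (fun _ : Fin n => ℝ) σ.symm
  rw [← h.integral_comp' F]
  refine integral_congr_ae (ae_of_all _ fun p => ?_)
  refine congrArg F (funext fun i => ?_)
  obtain ⟨j, rfl⟩ := σ.symm.surjective i
  rw [MeasurableEquiv.coe_piCongrLeft, Equiv.piCongrLeft_apply_apply]
  simp

end Fubini

/-! ### Integration by parts for the regularized weight -/

/-- The logarithmic derivative in the first particle is `-c V' + β ∑ x / (x ^ 2 + ε)`, the sum being
over the differences `x` to the other particles. -/
lemma hasDerivAt_regWeight_cons (V : Polynomial ℝ) {c β ε : ℝ} (hε : 0 < ε) {n : ℕ}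
    (y : Fin n → ℝ) (l : ℝ) :
    HasDerivAt (fun l => regWeight c β ε (fun x => V.eval x) (n + 1) (Fin.cons l y))
      (regWeight c β ε (fun x => V.eval x) (n + 1) (Fin.cons l y) *
        (-(c * V.derivative.eval l) + ∑ j, β * ((l - y j) / ((l - y j) ^ 2 + ε)))) l := by
  have hpos : ∀ (l : ℝ) j, 0 < (l - y j) ^ 2 + ε := fun l j => by positivity
  have hexp : ∀ l, regWeight c β ε (fun x => V.eval x) (n + 1) (Fin.cons l y) =
      Real.exp (-(c * V.eval l) + ∑ j, Real.log ((l - y j) ^ 2 + ε) * (β / 2)) *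
        regWeight c β ε (fun x => V.eval x) n y := by
    intro l
    rw [regWeight_cons, Real.exp_add, Real.exp_sum]
    congr 2
    exact Finset.prod_congr rfl fun j _ => Real.rpow_def_of_pos (hpos l j) _
  simp only [hexp]
  have hlog : ∀ j, HasDerivAt (fun l => Real.log ((l - y j) ^ 2 + ε) * (β / 2))
      (β * ((l - y j) / ((l - y j) ^ 2 + ε))) l := by
    intro j
    have h1 : HasDerivAt (fun l => (l - y j) ^ 2 + ε) (2 * (l - y j)) l := by
      simpa using (((hasDerivAt_id l).sub_const (y j)).pow 2).add_const ε
    exact ((h1.log (hpos l j).ne').mul_const (β / 2)).congr_deriv (by ring)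
  have hsum := HasDerivAt.fun_sum (u := Finset.univ) fun j _ => hlog j
  have hV := ((V.hasDerivAt l).const_mul c).neg
  refine (((hV.add hsum).exp).mul_const
    (regWeight c β ε (fun x => V.eval x) n y)).congr_deriv ?_
  simp only [Pi.add_apply, Pi.neg_apply]
  ring

lemma abs_div_sq_add_le {ε : ℝ} (h0 : 0 < ε) (h1 : ε ≤ 1) (x : ℝ) :
    |x / (x ^ 2 + ε)| ≤ ε⁻¹ := by
  have hp : 0 < x ^ 2 + ε := by positivity
  rw [abs_div, abs_of_pos hp, div_le_iff₀ hp, inv_mul_eq_div, le_div_iff₀ h0, ← sq_abs x]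
  have := abs_nonneg x
  rcases le_total |x| 1 with h | h <;> nlinarith [sq_nonneg (|x|)]

/-- The standing assumptions: a confining polynomial potential, positive `c` and `β`, and a spectral
parameter `z` off the real line. -/
structure LoopData (V : Polynomial ℝ) (c β : ℝ) (z : ℂ) : Prop where
  hdeg : Even V.natDegree
  hpos : 0 < V.natDegree
  hlead : 0 < V.leadingCoeff
  hc : 0 < c
  hβ : 0 < β
  hz : z.im ≠ 0

section LoopEquation

variable {V : Polynomial ℝ} {c β : ℝ} {z : ℂ}

lemma integrable_resolvent (H : LoopData V c β z) {ε : ℝ}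
    (h0 : 0 ≤ ε) (h1 : ε ≤ 1) (n : ℕ) (i : Fin n) :
    Integrable (fun Λ => (regWeight c β ε (fun x => V.eval x) n Λ : ℂ) * (z - Λ i)⁻¹) := by
  have hr := continuous_resolvent H.hz
  refine integrable_regWeight_mul V H.hdeg H.hpos H.hlead H.hc H.hβ h0 h1 0 n
    (hr.comp (continuous_apply i)) i |z.im|⁻¹ fun Λ => ?_
  simpa using inv_norm_le H.hz (Λ i)

lemma integrable_resolvent_sq (H : LoopData V c β z) {ε : ℝ}
    (h0 : 0 ≤ ε) (h1 : ε ≤ 1) (n : ℕ) (i j : Fin n) :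
    Integrable (fun Λ => (regWeight c β ε (fun x => V.eval x) n Λ : ℂ) *
      ((z - Λ i)⁻¹ * (z - Λ j)⁻¹)) := by
  have hr := continuous_resolvent H.hz
  refine integrable_regWeight_mul V H.hdeg H.hpos H.hlead H.hc H.hβ h0 h1 0 n
    ((hr.comp (continuous_apply i)).mul (hr.comp (continuous_apply j))) i
      (|z.im|⁻¹ * |z.im|⁻¹) fun Λ => ?_
  rw [norm_mul]
  simpa using mul_le_mul (inv_norm_le H.hz (Λ i)) (inv_norm_le H.hz (Λ j)) (norm_nonneg _)
    (by positivity)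

lemma integrable_potential (H : LoopData V c β z) {ε : ℝ}
    (h0 : 0 ≤ ε) (h1 : ε ≤ 1) (n : ℕ) (i : Fin n) :
    Integrable (fun Λ => (regWeight c β ε (fun x => V.eval x) n Λ : ℂ) *
      (((V.derivative.eval (Λ i) : ℝ) : ℂ) * (z - Λ i)⁻¹)) := by
  have hr := continuous_resolvent H.hz
  have hV := V.derivative.continuous
  refine integrable_regWeight_mul V H.hdeg H.hpos H.hlead H.hc H.hβ h0 h1 V.derivative n
    (Continuous.mul (by fun_prop) (hr.comp (continuous_apply i))) i |z.im|⁻¹ fun Λ => ?_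
  rw [norm_mul, Complex.norm_real, Real.norm_eq_abs, mul_comm]
  exact mul_le_mul (inv_norm_le H.hz (Λ i)) (by linarith) (by positivity) (by positivity)

lemma integrable_interaction (H : LoopData V c β z) {ε : ℝ}
    (h0 : 0 < ε) (h1 : ε ≤ 1) (n : ℕ) (i j k : Fin n) :
    Integrable (fun Λ => (regWeight c β ε (fun x => V.eval x) n Λ : ℂ) *
      ((((Λ i - Λ j) / ((Λ i - Λ j) ^ 2 + ε) : ℝ) : ℂ) * (z - Λ k)⁻¹)) := by
  have hr := continuous_resolvent H.hz
  have hd : Continuous (fun Λ : Fin n → ℝ => (Λ i - Λ j) / ((Λ i - Λ j) ^ 2 + ε)) :=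
    Continuous.div (by fun_prop) (by fun_prop) fun Λ => by positivity
  refine integrable_regWeight_mul V H.hdeg H.hpos H.hlead H.hc H.hβ h0.le h1 0 n
    (Continuous.mul (by fun_prop) (hr.comp (continuous_apply k))) i (ε⁻¹ * |z.im|⁻¹) fun Λ => ?_
  rw [norm_mul, Complex.norm_real, Real.norm_eq_abs]
  simpa using mul_le_mul (abs_div_sq_add_le h0 h1 (Λ i - Λ j)) (inv_norm_le H.hz (Λ k))
    (norm_nonneg _) (by positivity)

/-- Integrating `∂ (W / (z - Λ 0))` over all particles gives zero. -/
lemma integration_by_parts (H : LoopData V c β z) {ε : ℝ} (h0 : 0 < ε) (h1 : ε ≤ 1) (n : ℕ) :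
    (c : ℂ) * ∫ Λ, (regWeight c β ε (fun x => V.eval x) (n + 1) Λ : ℂ) *
        (((V.derivative.eval (Λ 0) : ℝ) : ℂ) * (z - Λ 0)⁻¹) =
      (∫ Λ, (regWeight c β ε (fun x => V.eval x) (n + 1) Λ : ℂ) *
        ((z - Λ 0)⁻¹ * (z - Λ 0)⁻¹)) +
      ∑ j : Fin n, (β : ℂ) * ∫ Λ, (regWeight c β ε (fun x => V.eval x) (n + 1) Λ : ℂ) *
        ((((Λ 0 - Λ j.succ) / ((Λ 0 - Λ j.succ) ^ 2 + ε) : ℝ) : ℂ) * (z - Λ 0)⁻¹) := by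
  set W := regWeight c β ε (fun x => V.eval x) (n + 1) with hW
  have iA := (integrable_potential H h0.le h1 (n + 1) 0).const_mul (c : ℂ)
  have iB := integrable_resolvent_sq H h0.le h1 (n + 1) 0 0
  have iJ := fun j : Fin n =>
    (integrable_interaction H h0 h1 (n + 1) 0 j.succ 0).const_mul (β : ℂ)
  have iS := integrable_finsetSum Finset.univ fun j _ => iJ j
  have if0 := integrable_resolvent H h0.le h1 (n + 1) 0
  simp only [← hW] at iA iB iJ iS if0
  have iF := (iB.add iS).sub iA
  have hF0 := integral_cons_symm iF
  replace hF0 := hF0.trans (integral_eq_zero_of_ae (by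
    filter_upwards [(integrable_cons iF).prod_left_ae, (integrable_cons if0).prod_left_ae]
      with y hy1 hy2
    refine integral_eq_zero_of_hasDerivAt_of_integrable (fun l => ?_) hy1 hy2
    have hd := (hasDerivAt_regWeight_cons V (c := c) (β := β) h0 y l).ofReal_comp
    have hinv : HasDerivAt (fun l : ℝ => (z - l)⁻¹) ((z - l)⁻¹ * (z - l)⁻¹) l := by
      have h3 : HasDerivAt (fun l : ℝ => z - (l : ℂ)) (-1) l :=
        (hasDerivAt_id l).ofReal_comp.const_sub z
      refine (h3.inv (sub_ofReal_ne_zero H.hz l)).congr_deriv ?_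
      have := sub_ofReal_ne_zero H.hz l
      field_simp
    refine (hd.mul hinv).congr_deriv ?_
    simp only [← hW, Pi.sub_apply, Pi.add_apply, Fin.cons_zero, Fin.cons_succ]
    push_cast
    have hsum : (∑ j, (β : ℂ) * ((W (Fin.cons l y) : ℂ) *
          (((l : ℂ) - y j) / (((l : ℂ) - y j) ^ 2 + ε) * (z - l)⁻¹))) =
        (W (Fin.cons l y) : ℂ) *
          (∑ j, (β : ℂ) * (((l : ℂ) - y j) / (((l : ℂ) - y j) ^ 2 + ε))) * (z - l)⁻¹ := by
      rw [Finset.mul_sum, Finset.sum_mul]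
      exact Finset.sum_congr rfl fun j _ => by ring
    rw [hsum]
    ring))
  rw [integral_sub' (iB.add iS) iA, integral_add' iB iS,
    integral_finsetSum _ fun j _ => iJ j] at hF0
  simp only [integral_const_mul] at hF0
  linear_combination -hF0

/-- Exchanging particles `i` and `j` and averaging cancels the difference in the interaction kernel,
because `1 / (z - x) - 1 / (z - y) = (x - y) / ((z - x) (z - y))`. -/
lemma symmetrization (H : LoopData V c β z) {ε : ℝ} (h0 : 0 < ε) (h1 : ε ≤ 1) (n : ℕ)
    (i j : Fin n) :
    2 * ∫ Λ, (regWeight c β ε (fun x => V.eval x) n Λ : ℂ) *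
        ((((Λ i - Λ j) / ((Λ i - Λ j) ^ 2 + ε) : ℝ) : ℂ) * (z - Λ i)⁻¹) =
      ∫ Λ, (regWeight c β ε (fun x => V.eval x) n Λ : ℂ) *
        ((((Λ i - Λ j) ^ 2 / ((Λ i - Λ j) ^ 2 + ε) : ℝ) : ℂ) *
          ((z - Λ i)⁻¹ * (z - Λ j)⁻¹)) := by
  have e1 := integral_comp_perm (Equiv.swap i j)
    (fun Λ : Fin n → ℝ => (regWeight c β ε (fun x => V.eval x) n Λ : ℂ) *
        ((((Λ i - Λ j) / ((Λ i - Λ j) ^ 2 + ε) : ℝ) : ℂ) * (z - Λ i)⁻¹))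
  simp only [regWeight_comp_perm H.hβ h0.le, Function.comp_apply, Equiv.swap_apply_left,
    Equiv.swap_apply_right] at e1
  rw [two_mul]
  nth_rewrite 2 [← e1]
  rw [← integral_add (integrable_interaction H h0 h1 n i j i)
    (integrable_interaction H h0 h1 n j i j)]
  refine integral_congr_ae (ae_of_all _ fun Λ => ?_)
  have hi := sub_ofReal_ne_zero H.hz (Λ i)
  have hj := sub_ofReal_ne_zero H.hz (Λ j)
  have hsymm : (Λ j - Λ i) / ((Λ j - Λ i) ^ 2 + ε) =
      -((Λ i - Λ j) / ((Λ i - Λ j) ^ 2 + ε)) := by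
    rw [← neg_sub (Λ i) (Λ j), neg_sq, neg_div]
  have hres : (z - Λ i)⁻¹ - (z - Λ j)⁻¹ =
      ((Λ i - Λ j : ℝ) : ℂ) * ((z - Λ i)⁻¹ * (z - Λ j)⁻¹) := by
    field_simp
    push_cast
    ring
  have hsq : (Λ i - Λ j) ^ 2 / ((Λ i - Λ j) ^ 2 + ε) =
      (Λ i - Λ j) / ((Λ i - Λ j) ^ 2 + ε) * (Λ i - Λ j) := by ring
  simp only [hsymm, hsq]
  rw [Complex.ofReal_mul, Complex.ofReal_neg]
  linear_combination (regWeight c β ε (fun x => V.eval x) n Λ : ℂ) *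
    (((Λ i - Λ j) / ((Λ i - Λ j) ^ 2 + ε) : ℝ) : ℂ) * hres

/-- By symmetry the pair integral does not depend on the second particle. -/
lemma pair_integral_eq (hβ : 0 < β) {ε : ℝ} (h0 : 0 ≤ ε) (k : ℕ) (j : Fin (k + 1)) :
    (∫ Λ, (regWeight c β ε (fun x => V.eval x) (k + 2) Λ : ℂ) *
        ((((Λ 0 - Λ j.succ) ^ 2 / ((Λ 0 - Λ j.succ) ^ 2 + ε) : ℝ) : ℂ) *
          ((z - Λ 0)⁻¹ * (z - Λ j.succ)⁻¹))) =
      ∫ Λ, (regWeight c β ε (fun x => V.eval x) (k + 2) Λ : ℂ) *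
        ((((Λ 0 - Λ 1) ^ 2 / ((Λ 0 - Λ 1) ^ 2 + ε) : ℝ) : ℂ) *
          ((z - Λ 0)⁻¹ * (z - Λ 1)⁻¹)) := by
  have e1 := integral_comp_perm (Equiv.swap 1 j.succ)
    (fun Λ : Fin (k + 2) → ℝ => (regWeight c β ε (fun x => V.eval x) (k + 2) Λ : ℂ) *
        ((((Λ 0 - Λ 1) ^ 2 / ((Λ 0 - Λ 1) ^ 2 + ε) : ℝ) : ℂ) *
          ((z - Λ 0)⁻¹ * (z - Λ 1)⁻¹)))
  have hs : Equiv.swap (1 : Fin (k + 2)) j.succ 0 = 0 :=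
    Equiv.swap_apply_of_ne_of_ne (by simp) (Fin.succ_ne_zero j).symm
  simpa only [regWeight_comp_perm hβ h0, Function.comp_apply, Equiv.swap_apply_left, hs] using e1

/-- The loop equation for the regularized weight. -/
lemma regularized_loop_equation (H : LoopData V c β z) {ε : ℝ} (h0 : 0 < ε) (h1 : ε ≤ 1) (k : ℕ) :
    (c : ℂ) * ∫ Λ, (regWeight c β ε (fun x => V.eval x) (k + 2) Λ : ℂ) *
        (((V.derivative.eval (Λ 0) : ℝ) : ℂ) * (z - Λ 0)⁻¹) =
      (∫ Λ, (regWeight c β ε (fun x => V.eval x) (k + 2) Λ : ℂ) *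
        ((z - Λ 0)⁻¹ * (z - Λ 0)⁻¹)) +
      (k + 1 : ℂ) * (β / 2) * ∫ Λ, (regWeight c β ε (fun x => V.eval x) (k + 2) Λ : ℂ) *
        ((((Λ 0 - Λ 1) ^ 2 / ((Λ 0 - Λ 1) ^ 2 + ε) : ℝ) : ℂ) *
          ((z - Λ 0)⁻¹ * (z - Λ 1)⁻¹)) := by
  rw [integration_by_parts H h0 h1 (k + 1)]
  congr 1
  have hj : ∀ j : Fin (k + 1),
      (β : ℂ) * ∫ Λ, (regWeight c β ε (fun x => V.eval x) (k + 2) Λ : ℂ) *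
        ((((Λ 0 - Λ j.succ) / ((Λ 0 - Λ j.succ) ^ 2 + ε) : ℝ) : ℂ) * (z - Λ 0)⁻¹) =
      (β / 2) * ∫ Λ, (regWeight c β ε (fun x => V.eval x) (k + 2) Λ : ℂ) *
        ((((Λ 0 - Λ 1) ^ 2 / ((Λ 0 - Λ 1) ^ 2 + ε) : ℝ) : ℂ) *
          ((z - Λ 0)⁻¹ * (z - Λ 1)⁻¹)) := by
    intro j
    rw [← pair_integral_eq H.hβ h0.le k j, ← symmetrization H h0 h1]
    ring
  rw [Finset.sum_congr rfl fun j _ => hj j]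
  simp
  ring

/-! ### Removing the regularization -/

lemma tendsto_regWeight_integral (H : LoopData V c β z) (n : ℕ) (i : Fin n) (U : Polynomial ℝ)
    {φ : ℝ → (Fin n → ℝ) → ℂ} {φ0 : (Fin n → ℝ) → ℂ} (C : ℝ)
    (hφ : ∀ ε > 0, Continuous (φ ε))
    (hC : ∀ ε > 0, ∀ Λ, ‖φ ε Λ‖ ≤ C * (1 + |U.eval (Λ i)|))
    (hlim : ∀ Λ, Tendsto
      (fun ε => (regWeight c β ε (fun x => V.eval x) n Λ : ℂ) * φ ε Λ) (𝓝[>] 0)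
      (𝓝 ((regWeight c β 0 (fun x => V.eval x) n Λ : ℂ) * φ0 Λ))) :
    Tendsto (fun ε => ∫ Λ, (regWeight c β ε (fun x => V.eval x) n Λ : ℂ) * φ ε Λ) (𝓝[>] 0)
      (𝓝 (∫ Λ, (regWeight c β 0 (fun x => V.eval x) n Λ : ℂ) * φ0 Λ)) := by
  obtain ⟨G, hG, hd⟩ := exists_integrable_dominating V H.hdeg H.hpos H.hlead H.hc H.hβ U n
  have hmem : ∀ᶠ ε in 𝓝[>] (0 : ℝ), 0 < ε ∧ ε ≤ 1 := by
    filter_upwards [Ioc_mem_nhdsGT (zero_lt_one' ℝ)] with ε hε using hε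
  refine tendsto_integral_filter_of_dominated_convergence (fun Λ => C * G Λ) ?_ ?_
    (hG.const_mul C) (ae_of_all _ hlim)
  · filter_upwards [hmem] with ε hε
    have h1 := continuous_regWeight (c := c) (ε := ε) H.hβ V.continuous n
    have h2 := hφ ε hε.1
    exact Continuous.aestronglyMeasurable (by fun_prop)
  · filter_upwards [hmem] with ε hε
    refine ae_of_all _ fun Λ => ?_
    have hw := regWeight_nonneg (c := c) (β := β) hε.1.le (fun x => V.eval x) n Λ
    have hC0 : 0 ≤ C := by
      have := (norm_nonneg _).trans (hC ε hε.1 Λ)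
      by_contra h
      push Not at h
      have h2 : 0 < 1 + |U.eval (Λ i)| := by positivity
      nlinarith
    rw [norm_mul, Complex.norm_real, Real.norm_of_nonneg hw]
    calc _ ≤ regWeight c β ε (fun x => V.eval x) n Λ * (C * (1 + |U.eval (Λ i)|)) := by
          gcongr
          exact hC ε hε.1 Λ
      _ = C * ((1 + |U.eval (Λ i)|) * regWeight c β ε (fun x => V.eval x) n Λ) := by ring
      _ ≤ _ := by
          gcongr
          exact hd ε hε.1.le hε.2 Λ i

lemma tendsto_regWeight (hβ : 0 < β) (n : ℕ) (Λ : Fin n → ℝ) :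
    Tendsto (fun ε => (regWeight c β ε (fun x => V.eval x) n Λ : ℂ)) (𝓝[>] 0)
      (𝓝 (regWeight c β 0 (fun x => V.eval x) n Λ : ℂ)) := by
  have h := (continuous_regWeight_eps (c := c) hβ (fun x => V.eval x) n Λ).tendsto 0
  exact (Complex.continuous_ofReal.tendsto _).comp (h.mono_left nhdsWithin_le_nhds)

lemma regWeight_zero_of_eq (hβ : 0 < β) {n : ℕ} {Λ : Fin n → ℝ} {i j : Fin n} (hij : i < j)
    (h : Λ i = Λ j) : regWeight c β 0 (fun x => V.eval x) n Λ = 0 := by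
  unfold regWeight
  refine mul_eq_zero_of_right _ (Finset.prod_eq_zero (Finset.mem_univ i)
    (Finset.prod_eq_zero (Finset.mem_Ioi.2 hij) ?_))
  rw [h, sub_self, add_zero, zero_pow two_ne_zero, Real.zero_rpow (by positivity)]

/-- The loop equation for the unregularized weight, before integrating out particles. -/
lemma unregularized_loop_equation (H : LoopData V c β z) (k : ℕ) :
    (c : ℂ) * ∫ Λ, (regWeight c β 0 (fun x => V.eval x) (k + 2) Λ : ℂ) *
        (((V.derivative.eval (Λ 0) : ℝ) : ℂ) * (z - Λ 0)⁻¹) =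
      (∫ Λ, (regWeight c β 0 (fun x => V.eval x) (k + 2) Λ : ℂ) *
        ((z - Λ 0)⁻¹ * (z - Λ 0)⁻¹)) +
      (k + 1 : ℂ) * (β / 2) * ∫ Λ, (regWeight c β 0 (fun x => V.eval x) (k + 2) Λ : ℂ) *
          ((z - Λ 0)⁻¹ * (z - Λ 1)⁻¹) := by
  have hr := continuous_resolvent H.hz
  have hri := fun i : Fin (k + 2) => hr.comp (continuous_apply (A := fun _ => ℝ) i)
  have hV := V.derivative.continuous
  have tA := tendsto_regWeight_integral H (k + 2) 0 V.derivative
    (φ := fun _ Λ => ((V.derivative.eval (Λ 0) : ℝ) : ℂ) * (z - Λ 0)⁻¹)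
    (φ0 := fun Λ => ((V.derivative.eval (Λ 0) : ℝ) : ℂ) * (z - Λ 0)⁻¹) |z.im|⁻¹
    (fun _ _ => Continuous.mul (by fun_prop) (hri 0))
    (fun _ _ Λ => by
      rw [norm_mul, Complex.norm_real, Real.norm_eq_abs, mul_comm]
      exact mul_le_mul (inv_norm_le H.hz (Λ 0)) (by linarith) (by positivity) (by positivity))
    (fun Λ => (tendsto_regWeight H.hβ _ Λ).mul_const _)
  have hbd : ∀ (Λ : Fin (k + 2) → ℝ) i j,
      ‖(z - Λ i)⁻¹ * (z - Λ j)⁻¹‖ ≤ |z.im|⁻¹ * |z.im|⁻¹ := fun Λ i j => by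
    rw [norm_mul]
    exact mul_le_mul (inv_norm_le H.hz (Λ i)) (inv_norm_le H.hz (Λ j)) (norm_nonneg _)
      (by positivity)
  have tB := tendsto_regWeight_integral H (k + 2) 0 0
    (φ := fun _ Λ => (z - Λ 0)⁻¹ * (z - Λ 0)⁻¹)
    (φ0 := fun Λ => (z - Λ 0)⁻¹ * (z - Λ 0)⁻¹) (|z.im|⁻¹ * |z.im|⁻¹)
    (fun _ _ => (hri 0).mul (hri 0))
    (fun _ _ Λ => by simpa using hbd Λ 0 0)
    (fun Λ => (tendsto_regWeight H.hβ _ Λ).mul_const _)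
  have tD := tendsto_regWeight_integral H (k + 2) 0 0
    (φ := fun ε Λ => (((Λ 0 - Λ 1) ^ 2 / ((Λ 0 - Λ 1) ^ 2 + ε) : ℝ) : ℂ) *
          ((z - Λ 0)⁻¹ * (z - Λ 1)⁻¹))
    (φ0 := fun Λ => (z - Λ 0)⁻¹ * (z - Λ 1)⁻¹) (|z.im|⁻¹ * |z.im|⁻¹)
    (fun ε hε => by
      have hd : Continuous
          (fun Λ : Fin (k + 2) → ℝ => (Λ 0 - Λ 1) ^ 2 / ((Λ 0 - Λ 1) ^ 2 + ε)) :=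
        Continuous.div (by fun_prop) (by fun_prop) fun Λ => by positivity
      exact Continuous.mul (by fun_prop) ((hri 0).mul (hri 1)))
    (fun ε hε Λ => by
      have h2 : |(Λ 0 - Λ 1) ^ 2 / ((Λ 0 - Λ 1) ^ 2 + ε)| ≤ 1 := by
        rw [abs_of_nonneg (by positivity), div_le_one (by positivity)]
        linarith
      rw [norm_mul, Complex.norm_real, Real.norm_eq_abs]
      simpa using mul_le_mul h2 (hbd Λ 0 1) (norm_nonneg _) zero_le_one)
    (fun Λ => by
      by_cases h : Λ 0 = Λ 1
      -- On the diagonal the ratio vanishes for every `ε`, and so does the limiting weight.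
      · have h01 : (0 : Fin (k + 2)) < 1 := by simp
        simp [h, regWeight_zero_of_eq (c := c) (V := V) H.hβ h01 h]
      · refine (tendsto_regWeight H.hβ _ Λ).mul ?_
        have hne : (Λ 0 - Λ 1) ^ 2 ≠ 0 := pow_ne_zero 2 (sub_ne_zero.2 h)
        have h3 : ContinuousAt (fun ε : ℝ => (Λ 0 - Λ 1) ^ 2 / ((Λ 0 - Λ 1) ^ 2 + ε)) 0 :=
          ContinuousAt.div (by fun_prop) (by fun_prop) (by simpa using hne)
        have h4 : Tendsto (fun ε : ℝ => (Λ 0 - Λ 1) ^ 2 / ((Λ 0 - Λ 1) ^ 2 + ε)) (𝓝[>] 0)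
            (𝓝 1) := by
          have := h3.tendsto
          rw [add_zero, div_self hne] at this
          exact this.mono_left nhdsWithin_le_nhds
        have h5 := ((Complex.continuous_ofReal.tendsto _).comp h4).mul_const
          ((z - Λ 0)⁻¹ * (z - Λ 1)⁻¹)
        simpa using h5)
  refine tendsto_nhds_unique (tA.const_mul (c : ℂ)) ?_
  refine (tB.add (tD.const_mul ((k + 1 : ℂ) * (β / 2)))).congr' ?_
  filter_upwards [Ioc_mem_nhdsGT (zero_lt_one' ℝ)] with ε hε
  exact (regularized_loop_equation H hε.1 hε.2 k).symm

end LoopEquation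

/-! ### Passing to the marginal densities -/

/-- the first loop equation for β-ensembles with polynomial potential. -/
theorem first_loop_equation
    (β : ℝ) (hβ : 0 < β) (Vp : Polynomial ℝ)
    (hdeg : Even Vp.natDegree) (hpos : 0 < Vp.natDegree) (hlead : 0 < Vp.leadingCoeff)
    (k : ℕ) :
    ∀ z : ℂ, z.im ≠ 0 →
      (∫ l : ℝ, (((Polynomial.derivative Vp).eval l * p1full β (fun x => Vp.eval x) k l : ℝ) : ℂ)
          / (z - l))
        = (((2 / (β * (k + 2 : ℝ))) : ℝ) : ℂ) *
            (∫ l : ℝ, ((p1full β (fun x => Vp.eval x) k l : ℝ) : ℂ) / (z - l) ^ 2)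
          + (((k + 1 : ℝ) / (k + 2 : ℝ) : ℝ) : ℂ) *
            ∫ l : ℝ, ∫ m : ℝ,
              ((p2full β (fun x => Vp.eval x) k l m : ℝ) : ℂ) / ((z - l) * (z - m)) := by
  intro z hz
  set c : ℝ := ((k + 2 : ℕ) : ℝ) * β / 2 with hc
  have hN : (0 : ℝ) < k + 2 := by positivity
  have H : LoopData Vp c β z := ⟨hdeg, hpos, hlead, by positivity, hβ, hz⟩
  have hW := fun Λ => regWeight_zero β (fun x => Vp.eval x) (k + 2) Λ
  rw [← hc] at hW
  have key := unregularized_loop_equation H k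
  have iA := integrable_potential H le_rfl zero_le_one (k + 2) 0
  have iB := integrable_resolvent_sq H le_rfl zero_le_one (k + 2) 0 0
  have iD := integrable_resolvent_sq H le_rfl zero_le_one (k + 2) 0 1
  simp only [hW] at key iA iB iD
  rw [integral_cons iA, integral_cons iB, integral_cons_cons iD] at key
  simp only [Fin.cons_zero, Fin.cons_one, integral_mul_const, integral_complex_ofReal] at key
  set Q := partitionFn β (fun x => Vp.eval x) (k + 2) with hQ
  have eA : (∫ l : ℝ, ((Vp.derivative.eval l * p1full β (fun x => Vp.eval x) k l : ℝ) : ℂ)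
      / (z - l)) = (Q⁻¹ : ℂ) * ∫ l : ℝ,
        ((∫ y : Fin (k + 1) → ℝ, betaWeight β (fun x => Vp.eval x) (k + 2) (Fin.cons l y) : ℝ) : ℂ)
          * (((Vp.derivative.eval l : ℝ) : ℂ) * (z - l)⁻¹) := by
    rw [← integral_const_mul]
    refine integral_congr_ae (ae_of_all _ fun l => ?_)
    simp only [p1full, ← hQ]
    push_cast
    ring
  have eB : (∫ l : ℝ, ((p1full β (fun x => Vp.eval x) k l : ℝ) : ℂ) / (z - l) ^ 2) =
      (Q⁻¹ : ℂ) * ∫ l : ℝ,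
        ((∫ y : Fin (k + 1) → ℝ, betaWeight β (fun x => Vp.eval x) (k + 2) (Fin.cons l y) : ℝ) : ℂ)
          * ((z - l)⁻¹ * (z - l)⁻¹) := by
    rw [← integral_const_mul]
    refine integral_congr_ae (ae_of_all _ fun l => ?_)
    simp only [p1full, ← hQ]
    push_cast
    rw [div_eq_mul_inv, pow_two, mul_inv]
    ring
  have eD : (∫ l : ℝ, ∫ m : ℝ, ((p2full β (fun x => Vp.eval x) k l m : ℝ) : ℂ) /
        ((z - l) * (z - m))) =
      (Q⁻¹ : ℂ) * ∫ l : ℝ, ∫ m : ℝ,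
        ((∫ y : Fin k → ℝ,
            betaWeight β (fun x => Vp.eval x) (k + 2) (Fin.cons l (Fin.cons m y)) : ℝ) : ℂ)
          * ((z - l)⁻¹ * (z - m)⁻¹) := by
    simp only [← integral_const_mul]
    refine integral_congr_ae (ae_of_all _ fun l => integral_congr_ae (ae_of_all _ fun m => ?_))
    simp only [p2full, ← hQ]
    push_cast
    rw [div_eq_mul_inv, mul_inv]
    ring
  have hN' : (k + 2 : ℂ) ≠ 0 := by exact_mod_cast hN.ne'
  have hβ' : (β : ℂ) ≠ 0 := by exact_mod_cast hβ.ne'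
  have hc' : (c : ℂ) = (k + 2) * β / 2 := by
    rw [hc]
    push_cast
    ring
  rw [hc'] at key
  have algebra : ∀ A B D q : ℂ,
      (k + 2) * β / 2 * A = B + (k + 1) * (β / 2) * D →
      q * A = 2 / (β * (k + 2)) * (q * B) + (k + 1) / (k + 2) * (q * D) := by
    intro A B D q h
    have hA : A = (B + (k + 1) * (β / 2) * D) * (2 / (β * (k + 2))) := by
      rw [← h]
      field_simp
    rw [hA]
    field_simp
  rw [eA, eB, eD]
  push_cast
  exact algebra _ _ _ _ key
end

section
/- (Bogoliubov inequality) Let (X, ν) be a measure space and H₁, H₂ : X → ℝ measurable functions such that e^{H₁} and e^{H₂} are ν-integrable with positive integrals, and such that (H₂ − H₁)e^{H₁} and (H₂ − H₁)e^{H₂} are ν-integrable. Then ⟨H₂ − H₁⟩_{H₁} ≤ ⟨H₂ − H₁⟩_{H₂}, i.e. ∫ (H₂−H₁) e^{H₁} dν / ∫ e^{H₁} dν ≤ ∫ (H₂−H₁) e^{H₂} dν / ∫ e^{H₂} dν. -/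
/-! Write `D = H₂ - H₁`, `Zᵢ = ∫ e^{Hᵢ} dν` and `c = log Z₂ - log Z₁`. The normalised densities
`e^{H₂}/Z₂` and `e^{H₁}/Z₁` compare pointwise exactly as `D` compares with `c`, so
`(D - c) (Z₁ e^{H₂} - Z₂ e^{H₁}) ≥ 0` everywhere. On integrating, the `c` terms cancel because both
densities have the same mass, and what remains is the claim. -/

open MeasureTheory

/-- the Bogoliubov inequality `⟨H₂-H₁⟩_{H₁} ≤ ⟨H₂-H₁⟩_{H₂}`. -/
theorem bogoliubov_inequality
    {X : Type*} [MeasurableSpace X] (ν : Measure X) (H₁ H₂ : X → ℝ)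
    (h1m : Measurable H₁) (h2m : Measurable H₂)
    (h1i : Integrable (fun x => Real.exp (H₁ x)) ν)
    (h2i : Integrable (fun x => Real.exp (H₂ x)) ν)
    (h1pos : 0 < ∫ x, Real.exp (H₁ x) ∂ν)
    (h2pos : 0 < ∫ x, Real.exp (H₂ x) ∂ν)
    (hd1 : Integrable (fun x => (H₂ x - H₁ x) * Real.exp (H₁ x)) ν)
    (hd2 : Integrable (fun x => (H₂ x - H₁ x) * Real.exp (H₂ x)) ν) :
    (∫ x, (H₂ x - H₁ x) * Real.exp (H₁ x) ∂ν) / (∫ x, Real.exp (H₁ x) ∂ν)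
      ≤ (∫ x, (H₂ x - H₁ x) * Real.exp (H₂ x) ∂ν) / ∫ x, Real.exp (H₂ x) ∂ν := by
  set Z₁ := ∫ x, Real.exp (H₁ x) ∂ν with hZ₁
  set Z₂ := ∫ x, Real.exp (H₂ x) ∂ν with hZ₂
  set c := Real.log Z₂ - Real.log Z₁ with hc
  have key : ∀ x, 0 ≤ (H₂ x - H₁ x - c) * (Z₁ * Real.exp (H₂ x) - Z₂ * Real.exp (H₁ x)) := by
    intro x
    have e1 : Z₁ * Real.exp (H₂ x) = Real.exp (H₂ x + Real.log Z₁) := by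
      rw [Real.exp_add, Real.exp_log h1pos, mul_comm]
    have e2 : Z₂ * Real.exp (H₁ x) = Real.exp (H₁ x + Real.log Z₂) := by
      rw [Real.exp_add, Real.exp_log h2pos, mul_comm]
    rw [e1, e2]
    rcases le_total (H₁ x + Real.log Z₂) (H₂ x + Real.log Z₁) with h | h
    · exact mul_nonneg (by linarith) (sub_nonneg.2 (Real.exp_le_exp.2 h))
    · exact mul_nonneg_of_nonpos_of_nonpos (by linarith) (sub_nonpos.2 (Real.exp_le_exp.2 h))
  have hint : 0 ≤ ∫ x, (H₂ x - H₁ x - c) * (Z₁ * Real.exp (H₂ x) - Z₂ * Real.exp (H₁ x)) ∂ν :=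
    integral_nonneg key
  have expand : ∀ x, (H₂ x - H₁ x - c) * (Z₁ * Real.exp (H₂ x) - Z₂ * Real.exp (H₁ x))
      = (Z₁ * ((H₂ x - H₁ x) * Real.exp (H₂ x)) - Z₂ * ((H₂ x - H₁ x) * Real.exp (H₁ x)))
        - (c * Z₁ * Real.exp (H₂ x) - c * Z₂ * Real.exp (H₁ x)) := fun x => by ring
  simp_rw [expand] at hint
  rw [integral_sub (by exact (hd2.const_mul _).sub (hd1.const_mul _))
      (by exact (h2i.const_mul _).sub (h1i.const_mul _)),
    integral_sub (hd2.const_mul _) (hd1.const_mul _),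
    integral_sub (h2i.const_mul _) (h1i.const_mul _)] at hint
  simp only [integral_const_mul, ← hZ₁, ← hZ₂] at hint
  rw [div_le_div_iff₀ h1pos h2pos]
  linarith
end
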